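/- arXiv:2003.10389 — 2 statements merged into one kernel-verified Lean document; each statement's English description precedes it below -/
import Mathlib

section
/- Let δ>0 with δ≠2. For every continuous function φ:[0,1]→ℝ and every C² function h:[0,1]→ℝ with compact support contained in (0,1), the following integration by parts formula holds: ∫₀¹ φ(r)h(r) dr = −∫₀¹∫₀¹ φ(s) h''(r) G_δ(s,r) dr ds + (1/(4(δ−2))) ∫₀¹∫₀¹ φ(s) h(r) (∫₀^∞ b^{δ−1} (d³/db³)Σ^δ_{r,s}(b) db) dr ds. -/
open MeasureTheory Real Filter

/-- Ascending Pochhammer symbol `(a)_k = a(a+1)⋯(a+k-1)`. -/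
noncomputable def poch (a : ℝ) (k : ℕ) : ℝ := ∏ i ∈ Finset.range k, (a + i)

/-- Gauss hypergeometric function `₂F₁(a,b,c,z) = ∑ (a)_k (b)_k / (k! (c)_k) z^k`. -/
noncomputable def hyp2F1 (a b c z : ℝ) : ℝ :=
  ∑' k : ℕ, (poch a k * poch b k) / ((Nat.factorial k : ℝ) * poch c k) * z ^ k

/-- `K(δ) = 2 Γ((δ+1)/2)² / Γ(δ/2)²`. -/
noncomputable def Kcoef (δ : ℝ) : ℝ :=
  2 * Real.Gamma ((δ + 1) / 2) ^ 2 / Real.Gamma (δ / 2) ^ 2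

/-- Two-point kernel `G_δ(s,r)`, equal to the second moment `E^δ[X_s X_r]` of a
δ-dimensional Bessel bridge from 0 to 0 over [0,1]. -/
noncomputable def twoPt (δ s r : ℝ) : ℝ :=
  if s < r then
    Kcoef δ * (r - s) ^ (δ / 2 + 1) * (s * (1 - r)) ^ ((1 : ℝ) / 2) *
      (r * (1 - s)) ^ (-((δ + 1) / 2)) *
      hyp2F1 ((δ + 1) / 2) ((δ + 1) / 2) (δ / 2) (s * (1 - r) / (r * (1 - s)))
  else
    Kcoef δ * (s - r) ^ (δ / 2 + 1) * (r * (1 - s)) ^ ((1 : ℝ) / 2) *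
      (s * (1 - r)) ^ (-((δ + 1) / 2)) *
      hyp2F1 ((δ + 1) / 2) ((δ + 1) / 2) (δ / 2) (r * (1 - s) / (s * (1 - r)))

/-- Coefficient `D(s,r)`. -/
noncomputable def Dcoef (s r : ℝ) : ℝ :=
  if s < r then (1 - s) / ((r - s) * (1 - r)) else s / (r * (s - r))

/-- Coefficient `C_k = Γ(k+(δ+1)/2)/(Γ(δ/2) Γ(k+δ/2) k!)`. -/
noncomputable def Ccoef (δ : ℝ) (k : ℕ) : ℝ :=
  Real.Gamma ((k : ℝ) + (δ + 1) / 2) /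
    (Real.Gamma (δ / 2) * Real.Gamma ((k : ℝ) + δ / 2) * (Nat.factorial k : ℝ))

/-- Coefficient `f_k(s,r)`. -/
noncomputable def fcoef (s r : ℝ) (k : ℕ) : ℝ :=
  if s < r then (2 * (r - s)) ^ ((1 : ℝ) / 2 - (k : ℝ)) * (s / r) ^ ((k : ℝ) + 1 / 2)
  else (2 * (s - r)) ^ ((1 : ℝ) / 2 - (k : ℝ)) * ((1 - s) / (1 - r)) ^ ((k : ℝ) + 1 / 2)

/-- `Σ^δ_{r,s}(b) = Σ^δ_r(X_s | b)`, the density-weighted conditional expectation of a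
δ-dimensional Bessel bridge. -/
noncomputable def SigmaRS (δ r s b : ℝ) : ℝ :=
  ((2 : ℝ) ^ (δ / 2 - 1) * (r * (1 - r)) ^ (δ / 2))⁻¹ *
    Real.exp (-(Dcoef s r) * b ^ 2 / 2) *
    ∑' k : ℕ, Ccoef δ k * fcoef s r k * b ^ (2 * k)

/-!
Euler's transformation turns the two-point kernel into
`K(δ) u(s) u(r) ₂F₁(-1/2, -1/2, δ/2, z(s, r))` with `u(r) = √(r (1 - r))`, which extends
continuously to the diagonal. For `r > s` its second derivative in `r` is, up to a factor,
`u(s) u(r)⁻³ ₂F₁(3/2, -1/2, δ/2, z(s, r))`. The integral of `b ^ (δ - 1)` against the third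
derivative of `Σ^δ_{r,s}` is `4 (δ - 2)` times this second derivative: under `x = b ^ 2` it becomes
a Mellin transform of `e ^ (-β x) ₁F₁(α x)`, which is a `₂F₁` in `α / β = z(s, r)`.

Across the diagonal the first derivative of the kernel jumps by `-1`, by Gauss's summation theorem.
Integrating the second derivative of `h` against the kernel by parts twice on each side of the
diagonal therefore leaves `-h s` and the integral of `h` against the second derivative of the
kernel, and integrating against `φ s` gives the formula.
-/

section Pochhammer

lemma poch_zero (a : ℝ) : poch a 0 = 1 := by simp [poch]

lemma poch_succ (a : ℝ) (k : ℕ) : poch a (k + 1) = poch a k * (a + k) :=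
  Finset.prod_range_succ _ _

lemma poch_succ' (a : ℝ) (k : ℕ) : poch a (k + 1) = a * poch (a + 1) k := by
  simp only [poch, Finset.prod_range_succ', Nat.cast_zero, add_zero, mul_comm a]
  congr! 2 with i
  push_cast
  ring

lemma poch_one (k : ℕ) : poch 1 k = (k.factorial : ℝ) := by
  induction k with
  | zero => simp [poch_zero]
  | succ k ih => rw [poch_succ, ih, Nat.factorial_succ]; push_cast; ring

lemma poch_pos {a : ℝ} (ha : 0 < a) (k : ℕ) : 0 < poch a k :=
  Finset.prod_pos fun i _ ↦ by positivity

lemma poch_nonneg {a : ℝ} (ha : 0 ≤ a) (k : ℕ) : 0 ≤ poch a k :=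
  Finset.prod_nonneg fun i _ ↦ by positivity

lemma Gamma_natCast_add {a : ℝ} (ha : 0 < a) (k : ℕ) : Gamma (k + a) = Gamma a * poch a k := by
  induction k with
  | zero => simp [poch_zero]
  | succ k ih =>
    rw [show ((k + 1 : ℕ) : ℝ) + a = k + a + 1 by push_cast; ring, Gamma_add_one (by positivity),
      ih, poch_succ]
    ring

end Pochhammer

section PowerSeries

variable {p : ℕ → ℝ} {R : ℝ}

lemma summable_natCast_mul_abs_mul_pow {ρ : ℝ} (hρ : 0 < ρ) (hρR : ρ < R)
    (hp : ∀ x, |x| < R → Summable fun k ↦ p k * x ^ k) :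
    Summable fun k : ℕ ↦ (k : ℝ) * |p k| * ρ ^ (k - 1) := by
  obtain ⟨σ, hρσ, hσR⟩ := exists_between hρR
  have hσ : 0 < σ := hρ.trans hρσ
  obtain ⟨M, hM⟩ := (hp σ (by rwa [abs_of_pos hσ])).tendsto_atTop_zero.norm.bddAbove_range
  have hgeom : Summable fun k : ℕ ↦ (k : ℝ) ^ 1 * (ρ / σ) ^ k :=
    summable_pow_mul_geometric_of_norm_lt_one 1
      (by rw [norm_eq_abs, abs_of_pos (by positivity)]; exact (div_lt_one hσ).2 hρσ)
  refine .of_nonneg_of_le (fun k ↦ by positivity) (fun k ↦ ?_) (hgeom.mul_left (M / ρ))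
  have hMk : |p k| * σ ^ k ≤ M := by simpa [abs_mul, abs_of_pos hσ] using hM ⟨k, rfl⟩
  rcases k with _ | k
  · simp
  · calc ((k + 1 : ℕ) : ℝ) * |p (k + 1)| * ρ ^ (k + 1 - 1)
        = |p (k + 1)| * σ ^ (k + 1) / ρ * (((k + 1 : ℕ) : ℝ) ^ 1 * (ρ / σ) ^ (k + 1)) := by
          rw [div_pow, Nat.add_sub_cancel, pow_succ ρ]; field_simp
      _ ≤ M / ρ * (((k + 1 : ℕ) : ℝ) ^ 1 * (ρ / σ) ^ (k + 1)) := by gcongr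

lemma hasDerivAt_tsum_mul_pow {z : ℝ} (hp : ∀ x, |x| < R → Summable fun k ↦ p k * x ^ k)
    (hz : |z| < R) :
    HasDerivAt (fun x ↦ ∑' k, p k * x ^ k) (∑' k : ℕ, ((k : ℝ) + 1) * p (k + 1) * z ^ k) z := by
  obtain ⟨ρ, hzρ, hρR⟩ := exists_between hz
  have hρ : 0 < ρ := (abs_nonneg z).trans_lt hzρ
  have hdom := summable_natCast_mul_abs_mul_pow hρ hρR hp
  have hbound (k : ℕ) (x : ℝ) (hx : x ∈ Metric.ball 0 ρ) :
      ‖p k * (k * x ^ (k - 1))‖ ≤ k * |p k| * ρ ^ (k - 1) := by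
    have hxρ : |x| ≤ ρ := by simpa using (Metric.mem_ball.1 hx).le
    rw [norm_mul, norm_mul, norm_pow, norm_natCast, mul_left_comm, ← mul_assoc]
    gcongr
    · exact le_rfl
    · exact hxρ
  have hzball : z ∈ Metric.ball 0 ρ := by simpa using hzρ
  refine (hasDerivAt_tsum_of_isPreconnected hdom Metric.isOpen_ball
    (convex_ball _ _).isPreconnected (fun k x _ ↦ (hasDerivAt_pow k x).const_mul (p k)) hbound
    (Metric.mem_ball_self hρ) (hp 0 (by simpa using hρ.trans hρR)) hzball).congr_deriv ?_
  rw [(Summable.of_norm_bounded hdom fun k ↦ hbound k z hzball).tsum_eq_zero_add]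
  simp only [Nat.cast_zero, zero_mul, mul_zero, zero_add]
  congr! 2 with k
  push_cast
  ring

lemma analyticOnNhd_tsum_mul_pow (hR : 0 < R)
    (hp : ∀ x, |x| < R → Summable fun k ↦ p k * x ^ k) :
    AnalyticOnNhd ℝ (fun x ↦ ∑' k, p k * x ^ k) (Metric.ball 0 R) := by
  set P := FormalMultilinearSeries.ofScalars ℝ p
  have hrad : ENNReal.ofReal R ≤ P.radius := by
    refine le_of_forall_lt fun r hr ↦ ?_
    obtain ⟨ρ, hrρ, hρR⟩ := ENNReal.lt_iff_exists_nnreal_btwn.1 hr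
    refine hrρ.trans_le (P.le_radius_of_summable_norm ?_)
    have hρ : |(ρ : ℝ)| < R := by simpa [ENNReal.lt_ofReal_iff_toReal_lt] using hρR
    simpa [P, FormalMultilinearSeries.ofScalars_norm, abs_mul] using (hp ρ hρ).norm
  have hR' : 0 < ENNReal.ofReal R := ENNReal.ofReal_pos.2 hR
  have hsum : P.sum = fun x ↦ ∑' k, p k * x ^ k := by
    ext x
    simp [P, FormalMultilinearSeries.sum, mul_comm]
  simpa only [hsum, Metric.eball_ofReal] using
    ((P.hasFPowerSeriesOnBall (hR'.trans_le hrad)).mono hR' hrad).analyticOnNhd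

lemma continuousOn_tsum_mul_pow (hp : Summable p) :
    ContinuousOn (fun x ↦ ∑' k, p k * x ^ k) (Set.Icc 0 1) := by
  refine continuousOn_tsum (fun k ↦ by fun_prop) hp.abs fun k x hx ↦ ?_
  rw [norm_mul, norm_pow, norm_eq_abs, norm_of_nonneg hx.1]
  exact mul_le_of_le_one_right (abs_nonneg _) (pow_le_one₀ hx.1 hx.2)

end PowerSeries

section Hypergeometric

variable {a b c z : ℝ}

/-- The coefficient `(a)_k (b)_k / (k! (c)_k)` of `z ^ k` in `₂F₁(a, b, c, z)`. -/
noncomputable def hyp2F1Coeff (a b c : ℝ) (k : ℕ) : ℝ :=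
  poch a k * poch b k / ((k.factorial : ℝ) * poch c k)

lemma hyp2F1_eq_tsum (a b c z : ℝ) : hyp2F1 a b c z = ∑' k, hyp2F1Coeff a b c k * z ^ k := rfl

lemma hyp2F1Coeff_comm (a b c : ℝ) : hyp2F1Coeff a b c = hyp2F1Coeff b a c := by
  ext k
  simp only [hyp2F1Coeff, mul_comm]

lemma hyp2F1_comm (a b c z : ℝ) : hyp2F1 a b c z = hyp2F1 b a c z := by
  simp only [hyp2F1_eq_tsum, hyp2F1Coeff_comm]

lemma hyp2F1Coeff_zero (a b c : ℝ) : hyp2F1Coeff a b c 0 = 1 := by simp [hyp2F1Coeff, poch_zero]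

lemma hyp2F1Coeff_succ (hc : 0 < c) (k : ℕ) :
    hyp2F1Coeff a b c (k + 1) =
      (a + k) / (1 + k) * ((b + k) / (c + k)) * hyp2F1Coeff a b c k := by
  have := poch_pos hc k
  simp only [hyp2F1Coeff, poch_succ, Nat.factorial_succ]
  push_cast
  field_simp
  ring

lemma hyp2F1Coeff_succ' (hc : 0 < c) (k : ℕ) :
    ((k : ℝ) + 1) * hyp2F1Coeff a b c (k + 1) =
      a * b / c * hyp2F1Coeff (a + 1) (b + 1) (c + 1) k := by
  have := poch_pos (by linarith : (0 : ℝ) < c + 1) k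
  simp only [hyp2F1Coeff, poch_succ', Nat.factorial_succ]
  push_cast
  field_simp

lemma summable_hyp2F1Coeff_mul_pow (a b : ℝ) (hc : 0 < c) (hz : |z| < 1) :
    Summable fun k ↦ hyp2F1Coeff a b c k * z ^ k := by
  obtain ⟨ρ, hzρ, hρ⟩ := exists_between hz
  have hlim : Tendsto (fun k : ℕ ↦ |(a + k) / (1 + k) * ((b + k) / (c + k)) * z|) atTop
      (nhds |1 / 1 * (1 / 1) * z|) := by
    simpa using (((tendsto_add_mul_div_add_mul_atTop_nhds a 1 (1 : ℝ) one_ne_zero).mul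
      (tendsto_add_mul_div_add_mul_atTop_nhds b c (1 : ℝ) one_ne_zero)).mul_const z).abs
  refine summable_of_ratio_norm_eventually_le hρ ?_
  filter_upwards [hlim.eventually_le_const (by simpa using hzρ)] with k hk
  calc ‖hyp2F1Coeff a b c (k + 1) * z ^ (k + 1)‖
      = |(a + k) / (1 + k) * ((b + k) / (c + k)) * z| * ‖hyp2F1Coeff a b c k * z ^ k‖ := by
        rw [hyp2F1Coeff_succ hc, pow_succ, ← norm_eq_abs, ← norm_mul]
        ring_nf
    _ ≤ ρ * ‖hyp2F1Coeff a b c k * z ^ k‖ := by gcongr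

lemma hyp2F1_apply_zero (a b c : ℝ) : hyp2F1 a b c 0 = 1 := by
  rw [hyp2F1_eq_tsum, tsum_eq_single 0 fun k hk ↦ by simp [hk], hyp2F1Coeff_zero]
  simp

lemma hasDerivAt_hyp2F1 (a b : ℝ) (hc : 0 < c) (hz : |z| < 1) :
    HasDerivAt (hyp2F1 a b c) (a * b / c * hyp2F1 (a + 1) (b + 1) (c + 1) z) z := by
  refine (hasDerivAt_tsum_mul_pow
    (fun x hx ↦ summable_hyp2F1Coeff_mul_pow a b hc hx) hz).congr_deriv ?_
  rw [hyp2F1_eq_tsum, ← tsum_mul_left]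
  congr! 2 with k
  rw [hyp2F1Coeff_succ' hc, mul_assoc]

lemma analyticOnNhd_hyp2F1 (a b : ℝ) (hc : 0 < c) :
    AnalyticOnNhd ℝ (hyp2F1 a b c) (Metric.ball 0 1) :=
  analyticOnNhd_tsum_mul_pow one_pos fun _ hx ↦ summable_hyp2F1Coeff_mul_pow a b hc hx

lemma hasSum_of_succ_eq_add {f g d : ℕ → ℝ} {x y : ℝ} (hg : HasSum g x)
    (hd : HasSum d y) (h0 : f 0 = g 0) (hsucc : ∀ k, f (k + 1) = g (k + 1) + d k) :
    HasSum f (x + y) := by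
  have hfg : HasSum (f - g) y := by
    rw [← hasSum_nat_add_iff' 1]
    simpa [hsucc, h0] using hd
  simpa using hg.add hfg

lemma hasSum_hyp2F1_add_one_left (hc : 0 < c)
    (h₀ : Summable fun k ↦ hyp2F1Coeff a b c k * z ^ k)
    (h₁ : Summable fun k ↦ hyp2F1Coeff (a + 1) (b + 1) (c + 1) k * z ^ k) :
    HasSum (fun k ↦ hyp2F1Coeff (a + 1) b c k * z ^ k)
      (hyp2F1 a b c z + z * (b / c * hyp2F1 (a + 1) (b + 1) (c + 1) z)) := by
  refine hasSum_of_succ_eq_add h₀.hasSum ((h₁.hasSum.mul_left (b / c)).mul_left z)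
    (by simp [hyp2F1Coeff_zero]) fun k ↦ ?_
  have := poch_pos (by linarith : (0 : ℝ) < c + 1) k
  simp only [hyp2F1Coeff, poch_succ' a, poch_succ' b, poch_succ' c, poch_succ (a + 1),
    Nat.factorial_succ]
  push_cast
  field_simp
  ring

lemma hyp2F1_add_one_left (a b : ℝ) (hc : 0 < c) (hz : |z| < 1) :
    hyp2F1 (a + 1) b c z =
      hyp2F1 a b c z + z * (b / c * hyp2F1 (a + 1) (b + 1) (c + 1) z) :=
  (hasSum_hyp2F1_add_one_left hc (summable_hyp2F1Coeff_mul_pow a b hc hz)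
    (summable_hyp2F1Coeff_mul_pow _ _ (by linarith) hz)).tsum_eq

lemma hyp2F1_add_one_right (a b : ℝ) (hc : 0 < c) (hz : |z| < 1) :
    hyp2F1 a (b + 1) c z =
      hyp2F1 a b c z + z * (a / c * hyp2F1 (a + 1) (b + 1) (c + 1) z) := by
  simpa only [hyp2F1_comm b a, hyp2F1_comm (b + 1)] using hyp2F1_add_one_left b a hc hz

lemma hyp2F1_eq_add_one_lower (a b : ℝ) (hc : 0 < c) (hz : |z| < 1) :
    hyp2F1 a b c z = hyp2F1 a b (c + 1) z +
      z * (a * b / (c * (c + 1)) * hyp2F1 (a + 1) (b + 1) (c + 1 + 1) z) := by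
  have hc₁ : 0 < c + 1 := by linarith
  have hc₂ : 0 < c + 1 + 1 := by linarith
  refine (hasSum_of_succ_eq_add (summable_hyp2F1Coeff_mul_pow a b hc₁ hz).hasSum
    (((summable_hyp2F1Coeff_mul_pow (a + 1) (b + 1) hc₂ hz).hasSum.mul_left
      (a * b / (c * (c + 1)))).mul_left z) (by simp [hyp2F1Coeff, poch_zero]) fun k ↦ ?_).tsum_eq
  have := poch_pos hc₂ k
  have hck : poch (c + 1 + 1) k * (c + 1) = poch (c + 1) k * (c + 1 + k) := by
    rw [← poch_succ, poch_succ', mul_comm]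
  have := poch_pos hc₁ k
  simp only [hyp2F1Coeff, poch_succ' a, poch_succ' b, poch_succ' c, poch_succ (c + 1),
    Nat.factorial_succ]
  push_cast
  field_simp
  linear_combination a * b * poch (a + 1) k * poch (b + 1) k * z * z ^ k * (k + 1) * hck

lemma hyp2F1_ode (a b : ℝ) (hc : 0 < c) (hz : |z| < 1) :
    z * (1 - z) * deriv (deriv (hyp2F1 a b c)) z +
      (c - (a + b + 1) * z) * deriv (hyp2F1 a b c) z - a * b * hyp2F1 a b c z = 0 := by
  have hc₁ : 0 < c + 1 := by linarith
  have hd : deriv (hyp2F1 a b c) =ᶠ[nhds z]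
      fun x ↦ a * b / c * hyp2F1 (a + 1) (b + 1) (c + 1) x := by
    filter_upwards [Metric.isOpen_ball.mem_nhds (mem_ball_zero_iff.2 hz)] with x hx
    exact (hasDerivAt_hyp2F1 a b hc (by simpa using hx)).deriv
  rw [hd.deriv_eq, hd.eq_of_nhds,
    ((hasDerivAt_hyp2F1 (a + 1) (b + 1) hc₁ hz).const_mul (a * b / c)).deriv]
  have lower := hyp2F1_eq_add_one_lower (a + 1) (b + 1) hc hz
  have left := hyp2F1_add_one_left a (b + 1) hc hz
  have right := hyp2F1_add_one_right a b hc hz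
  have right' := hyp2F1_add_one_right (a + 1) (b + 1) hc₁ hz
  rw [left, right, right'] at lower
  field_simp at lower ⊢
  linear_combination -(a * b) * lower

end Hypergeometric

section EulerTransformation

open Set Topology

variable {a b c z : ℝ} {y y₁ y₂ : ℝ → ℝ}

/-- `y` is a solution of the hypergeometric differential equation
`z (1 - z) y'' + (c - (a + b + 1) z) y' - a b y = 0` on `(-1, 1)` which is analytic there, in
particular at the singular point `0`. -/
structure IsHypergeometricSolution (a b c : ℝ) (y : ℝ → ℝ) : Prop where
  analyticOnNhd : AnalyticOnNhd ℝ y (Metric.ball 0 1)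
  ode : ∀ z ∈ Metric.ball (0 : ℝ) 1,
    z * (1 - z) * deriv (deriv y) z + (c - (a + b + 1) * z) * deriv y z - a * b * y z = 0

lemma isHypergeometricSolution_hyp2F1 (a b : ℝ) (hc : 0 < c) :
    IsHypergeometricSolution a b c (hyp2F1 a b c) where
  analyticOnNhd := analyticOnNhd_hyp2F1 a b hc
  ode _ hz := hyp2F1_ode a b hc (by simpa using hz)

namespace IsHypergeometricSolution

lemma sub (h₁ : IsHypergeometricSolution a b c y₁) (h₂ : IsHypergeometricSolution a b c y₂) :
    IsHypergeometricSolution a b c (y₁ - y₂) where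
  analyticOnNhd := h₁.analyticOnNhd.sub h₂.analyticOnNhd
  ode z hz := by
    have hd : deriv (y₁ - y₂) =ᶠ[𝓝 z] deriv y₁ - deriv y₂ := by
      filter_upwards [Metric.isOpen_ball.mem_nhds hz] with x hx
      exact deriv_sub (h₁.analyticOnNhd x hx).differentiableAt
        (h₂.analyticOnNhd x hx).differentiableAt
    rw [hd.deriv_eq, hd.eq_of_nhds, deriv_sub (h₁.analyticOnNhd z hz).deriv.differentiableAt
      (h₂.analyticOnNhd z hz).deriv.differentiableAt]
    simp only [Pi.sub_apply]
    linear_combination h₁.ode z hz - h₂.ode z hz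

end IsHypergeometricSolution

lemma hasDerivAt_one_sub_rpow_mul {f : ℝ → ℝ} {f' : ℝ} (p : ℝ) (hz : z < 1)
    (hf : HasDerivAt f f' z) :
    HasDerivAt (fun x ↦ (1 - x) ^ p * f x) ((1 - z) ^ (p - 1) * ((1 - z) * f' - p * f z)) z := by
  have hz' : 0 < 1 - z := by linarith
  refine ((((hasDerivAt_id z).const_sub 1).rpow_const (p := p) (.inl hz'.ne')).mul
    hf).congr_deriv ?_
  simp only [id, rpow_sub_one hz'.ne']
  field_simp
  ring

lemma analyticAt_one_sub_rpow (p : ℝ) (hz : z < 1) : AnalyticAt ℝ (fun x ↦ (1 - x) ^ p) z := by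
  have hz' : 0 < 1 - z := by linarith
  have hsub : AnalyticAt ℝ (fun x ↦ 1 - x) z := by fun_prop
  refine ((hsub.log hz').mul analyticAt_const).rexp.congr (f := fun x ↦ exp (log (1 - x) * p)) ?_
  filter_upwards [eventually_lt_nhds hz] with x hx
  rw [rpow_def_of_pos (by linarith)]

namespace IsHypergeometricSolution

lemma one_sub_rpow_mul (h : IsHypergeometricSolution (c - a) (c - b) c y) :
    IsHypergeometricSolution a b c fun x ↦ (1 - x) ^ (c - a - b) * y x := by
  have hlt {x : ℝ} (hx : x ∈ Metric.ball (0 : ℝ) 1) : x < 1 :=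
    (abs_lt.1 (mem_ball_zero_iff.1 hx)).2
  refine ⟨fun x hx ↦ (analyticAt_one_sub_rpow _ (hlt hx)).mul (h.analyticOnNhd x hx),
    fun z hz ↦ ?_⟩
  set p := c - a - b with hp
  have hy {x : ℝ} (hx : x ∈ Metric.ball (0 : ℝ) 1) : HasDerivAt y (deriv y x) x :=
    (h.analyticOnNhd x hx).differentiableAt.hasDerivAt
  have hy' : HasDerivAt (deriv y) (deriv (deriv y) z) z :=
    (h.analyticOnNhd z hz).deriv.differentiableAt.hasDerivAt
  have hd : deriv (fun x ↦ (1 - x) ^ p * y x) =ᶠ[𝓝 z]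
      fun x ↦ (1 - x) ^ (p - 1) * ((1 - x) * deriv y x - p * y x) := by
    filter_upwards [Metric.isOpen_ball.mem_nhds hz] with x hx
    exact (hasDerivAt_one_sub_rpow_mul p (hlt hx) (hy hx)).deriv
  have hw : HasDerivAt (fun x ↦ (1 - x) * deriv y x - p * y x)
      ((1 - z) * deriv (deriv y) z - (1 + p) * deriv y z) z :=
    ((((hasDerivAt_id z).const_sub 1).mul hy').sub ((hy hz).const_mul p)).congr_deriv
      (by simp only [id]; ring)
  rw [hd.deriv_eq, hd.eq_of_nhds, (hasDerivAt_one_sub_rpow_mul (p - 1) (hlt hz) hw).deriv]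
  have hz' : 1 - z ≠ 0 := (sub_pos.2 (hlt hz)).ne'
  have hode := h.ode z hz
  simp only [rpow_sub_one hz']
  field_simp
  rw [hp]
  linear_combination (1 - z) ^ (c - a - b) * (1 - z) * hode

end IsHypergeometricSolution

lemma eventuallyEq_mul_deriv_of_eq_pow_mul {f g : ℝ → ℝ} {n : ℕ} (hg : AnalyticAt ℝ g 0)
    (hf : f =ᶠ[𝓝 0] fun x ↦ x ^ n * g x) :
    (fun x ↦ x * deriv f x) =ᶠ[𝓝 0] fun x ↦ x ^ n * (n * g x + x * deriv g x) := by
  filter_upwards [hf.deriv, hg.eventually_analyticAt] with x hx hgx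
  have hd : HasDerivAt (fun x ↦ x ^ n * g x) (n * x ^ (n - 1) * g x + x ^ n * deriv g x) x :=
    (hasDerivAt_pow n x).mul hgx.differentiableAt.hasDerivAt
  rw [hx, hd.deriv]
  rcases n with _ | n
  · simp
  · simp only [Nat.add_sub_cancel]
    ring

namespace IsHypergeometricSolution

/- The indicial exponents at `0` are `0` and `1 - c`: the order of vanishing `n` of a nonzero
analytic solution is a root of `n (n - 1 + c)`, hence `0`. -/
lemma eqOn_zero (h : IsHypergeometricSolution a b c y) (hc : 0 < c) (h0 : y 0 = 0) :
    EqOn y 0 (Metric.ball 0 1) := by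
  have h0mem : (0 : ℝ) ∈ Metric.ball 0 1 := by simp
  refine h.analyticOnNhd.eqOn_zero_of_preconnected_of_eventuallyEq_zero
    (convex_ball _ _).isPreconnected h0mem ?_
  by_contra hne
  obtain ⟨n, g, hg, hg0, hyg⟩ :=
    (h.analyticOnNhd 0 h0mem).exists_eventuallyEq_pow_smul_nonzero_iff.2 hne
  have hn : 1 ≤ n := by
    refine Nat.one_le_iff_ne_zero.2 fun hn ↦ hg0 ?_
    simpa [hn, h0] using hyg.self_of_nhds.symm
  have hy : y =ᶠ[𝓝 0] fun x ↦ x ^ n * g x := by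
    filter_upwards [hyg] with x hx
    simpa using hx
  set g₁ : ℝ → ℝ := fun x ↦ n * g x + x * deriv g x
  have hg₁ : AnalyticAt ℝ g₁ 0 := by fun_prop
  have hy₁ := eventuallyEq_mul_deriv_of_eq_pow_mul hg hy
  have hy₂ := eventuallyEq_mul_deriv_of_eq_pow_mul hg₁ hy₁
  set L : ℝ → ℝ := fun x ↦ (1 - x) * (n * g₁ x + x * deriv g₁ x - g₁ x) +
    (c - (a + b + 1) * x) * g₁ x - a * b * (x * g x)
  have hL : L =ᶠ[𝓝[≠] 0] 0 := by
    filter_upwards [nhdsWithin_le_nhds hy, nhdsWithin_le_nhds hy₁, nhdsWithin_le_nhds hy₂,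
      self_mem_nhdsWithin, nhdsWithin_le_nhds (Metric.isOpen_ball.mem_nhds h0mem)]
      with x h₀ h₁ h₂ hx hxball
    have hd : HasDerivAt (fun x ↦ x * deriv y x) (1 * deriv y x + x * deriv (deriv y) x) x :=
      (hasDerivAt_id x).mul (h.analyticOnNhd x hxball).deriv.differentiableAt.hasDerivAt
    rw [hd.deriv] at h₂
    refine (mul_eq_zero.1 ?_ : x ^ n = 0 ∨ L x = 0).resolve_left (pow_ne_zero _ hx)
    linear_combination x * h.ode x hxball - (1 - x) * (h₂ - h₁) -
      (c - (a + b + 1) * x) * h₁ + a * b * x * h₀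
  have hL0 : L 0 = 0 := by
    have hLcont : ContinuousAt L 0 := by fun_prop
    exact tendsto_nhds_unique (hLcont.tendsto.mono_left nhdsWithin_le_nhds)
      (tendsto_const_nhds.congr' hL.symm)
  have hn' : (1 : ℝ) ≤ n := by exact_mod_cast hn
  have hroot : (n : ℝ) * (n - 1 + c) ≠ 0 := mul_ne_zero (by linarith) (by linarith)
  refine hg0 ((mul_eq_zero.1 ?_).resolve_left hroot)
  linear_combination hL0

end IsHypergeometricSolution

theorem hyp2F1_euler (a b : ℝ) (hc : 0 < c) (hz : |z| < 1) :
    hyp2F1 a b c z = (1 - z) ^ (c - a - b) * hyp2F1 (c - a) (c - b) c z := by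
  have h := ((isHypergeometricSolution_hyp2F1 a b hc).sub
    (isHypergeometricSolution_hyp2F1 (c - a) (c - b) hc).one_sub_rpow_mul).eqOn_zero hc
    (by simp [hyp2F1_apply_zero])
  simpa [sub_eq_zero] using h (mem_ball_zero_iff.2 hz)

end EulerTransformation

section GaussSummation

open Set ProbabilityTheory

variable {a b c : ℝ}

lemma integral_rpow_mul_one_sub_rpow {u v : ℝ} (hu : 0 < u) (hv : 0 < v) :
    ∫ t in Ioo (0 : ℝ) 1, t ^ (u - 1) * (1 - t) ^ (v - 1) = beta u v := by
  have h := lintegral_betaPDF_eq_one hu hv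
  rw [lintegral_betaPDF, ← ENNReal.toReal_eq_one_iff, ← integral_eq_lintegral_of_nonneg_ae] at h
  · simp_rw [mul_assoc, integral_const_mul] at h
    field_simp at h
    exact (div_eq_one_iff_eq (beta_pos hu hv).ne').1 h
  · filter_upwards [ae_restrict_mem measurableSet_Ioo] with t ht
    have := beta_pos hu hv
    have := ht.1
    have : 0 < 1 - t := sub_pos.2 ht.2
    simp only [Pi.zero_apply]
    positivity
  · exact Measurable.aestronglyMeasurable (by fun_prop)

lemma integrableOn_rpow_mul_one_sub_rpow {u v : ℝ} (hu : 0 < u) (hv : 0 < v) :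
    IntegrableOn (fun t : ℝ ↦ t ^ (u - 1) * (1 - t) ^ (v - 1)) (Ioo 0 1) :=
  not_imp_comm.1 integral_undef
    ((integral_rpow_mul_one_sub_rpow hu hv).trans_ne (beta_pos hu hv).ne')

lemma poch_eq_eval_ascPochhammer (a : ℝ) (k : ℕ) : poch a k = (ascPochhammer ℝ k).eval a := by
  induction k with
  | zero => simp [poch_zero]
  | succ k ih => rw [poch_succ, ih, ascPochhammer_succ_eval]

lemma hasSum_one_sub_rpow_neg (a : ℝ) {t : ℝ} (ht : |t| < 1) :
    HasSum (fun k : ℕ ↦ poch a k / k.factorial * t ^ k) ((1 - t) ^ (-a)) := by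
  have h := (one_div_one_sub_rpow_hasFPowerSeriesOnBall_zero a).hasSum (y := t)
    (by simpa [← NNReal.coe_lt_coe, enorm_eq_nnnorm] using ht)
  have ht' : 0 < 1 - t := by linarith [(abs_lt.1 ht).2]
  have hcoeff (k : ℕ) : poch a k / k.factorial = Ring.choose (a + k - 1) k := by
    rw [← Ring.multichoose_eq, div_eq_iff (by positivity), poch_eq_eval_ascPochhammer,
      ← Polynomial.ascPochhammer_smeval_eq_eval,
      ← Ring.factorial_nsmul_multichoose_eq_ascPochhammer, nsmul_eq_mul, mul_comm]
  simpa [hcoeff, rpow_neg ht'.le, mul_comm] using h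

lemma beta_natCast_add (hb : 0 < b) (hbc : b < c) (k : ℕ) :
    beta (k + b) (c - b) = poch b k / poch c k * beta b (c - b) := by
  have hc : 0 < c := hb.trans hbc
  rw [beta, beta, show (k : ℝ) + b + (c - b) = k + c by ring, add_sub_cancel,
    Gamma_natCast_add hb, Gamma_natCast_add hc]
  have := (poch_pos hc k).ne'
  have := (Gamma_pos_of_pos hc).ne'
  field_simp

lemma hasSum_poch_div_factorial_mul_rpow_mul_one_sub_rpow (a b c : ℝ) {t : ℝ}
    (ht : t ∈ Ioo 0 1) :
    HasSum (fun k : ℕ ↦ poch a k / k.factorial * (t ^ (k + b - 1) * (1 - t) ^ (c - b - 1)))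
      (t ^ (b - 1) * (1 - t) ^ (c - a - b - 1)) := by
  have ht₁ : 0 < 1 - t := sub_pos.2 ht.2
  have hexp : t ^ (b - 1) * (1 - t) ^ (c - a - b - 1) =
      t ^ (b - 1) * (1 - t) ^ (c - b - 1) * (1 - t) ^ (-a) := by
    rw [mul_assoc, ← rpow_add ht₁]
    ring_nf
  rw [hexp]
  refine ((hasSum_one_sub_rpow_neg a (abs_lt.2 ⟨by linarith [ht.1], ht.2⟩)).mul_left
    (t ^ (b - 1) * (1 - t) ^ (c - b - 1))).congr_fun fun k ↦ ?_
  rw [show (k : ℝ) + b - 1 = (b - 1) + k by ring, rpow_add ht.1, rpow_natCast]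
  ring

theorem hasSum_hyp2F1Coeff_gauss (ha : 0 < a) (hb : 0 < b) (habc : a + b < c) :
    HasSum (hyp2F1Coeff a b c)
      (Gamma c * Gamma (c - a - b) / (Gamma (c - a) * Gamma (c - b))) := by
  have hcb : 0 < c - b := by linarith
  have hcab : 0 < c - a - b := by linarith
  set F : ℕ → ℝ → ℝ := fun k t ↦
    poch a k / k.factorial * (t ^ (k + b - 1) * (1 - t) ^ (c - b - 1))
  have hF_nonneg (k : ℕ) {t : ℝ} (ht : t ∈ Ioo (0 : ℝ) 1) : 0 ≤ F k t := by
    have := poch_pos ha k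
    have := ht.1
    have : 0 < 1 - t := sub_pos.2 ht.2
    positivity
  have hF_sum {t : ℝ} (ht : t ∈ Ioo (0 : ℝ) 1) :
      HasSum (fun k ↦ F k t) (t ^ (b - 1) * (1 - t) ^ (c - a - b - 1)) :=
    hasSum_poch_div_factorial_mul_rpow_mul_one_sub_rpow a b c ht
  have hF_integral (k : ℕ) :
      ∫ t in Ioo 0 1, F k t = hyp2F1Coeff a b c k * beta b (c - b) := by
    rw [integral_const_mul, integral_rpow_mul_one_sub_rpow (by positivity) hcb,
      beta_natCast_add hb (by linarith), hyp2F1Coeff, ← mul_assoc, div_mul_div_comm]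
  have hsum := hasSum_integral_of_dominated_convergence (μ := volume.restrict (Ioo 0 1)) F
    (fun k ↦ Measurable.aestronglyMeasurable (by fun_prop))
    (fun k ↦ ae_restrict_of_forall_mem measurableSet_Ioo fun t ht ↦
      (norm_of_nonneg (hF_nonneg k ht)).le)
    (ae_restrict_of_forall_mem measurableSet_Ioo fun t ht ↦ (hF_sum ht).summable)
    ((integrableOn_rpow_mul_one_sub_rpow hb hcab).congr_fun
      (fun t ht ↦ (hF_sum ht).tsum_eq.symm) measurableSet_Ioo)
    (ae_restrict_of_forall_mem measurableSet_Ioo fun t ht ↦ hF_sum ht)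
  simp only [hF_integral, integral_rpow_mul_one_sub_rpow hb hcab] at hsum
  have hbeta : beta b (c - a - b) / beta b (c - b) =
      Gamma c * Gamma (c - a - b) / (Gamma (c - a) * Gamma (c - b)) := by
    have := (Gamma_pos_of_pos hb).ne'
    rw [beta, beta, show b + (c - a - b) = c - a by ring, add_sub_cancel]
    field_simp
  simpa only [hbeta, mul_div_cancel_right₀ _ (beta_pos hb hcb).ne'] using
    hsum.div_const (beta b (c - b))

lemma summable_hyp2F1Coeff_of_add_one (hc : 0 < c)
    (h : Summable (hyp2F1Coeff (a + 1) (b + 1) (c + 1))) : Summable (hyp2F1Coeff a b c) := by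
  refine (summable_nat_add_iff 1).1 (.of_norm_bounded (h.mul_left (a * b / c)).norm fun k ↦ ?_)
  rw [← hyp2F1Coeff_succ' hc, norm_mul]
  refine le_mul_of_one_le_left (norm_nonneg _) ?_
  rw [norm_of_nonneg (by positivity)]
  linarith [k.cast_nonneg (α := ℝ)]

lemma hyp2F1_le_one {z : ℝ} (ha : 0 ≤ a) (hb : b ∈ Icc (-1) 0) (hc : 0 < c) (hz : z ∈ Ico 0 1) :
    hyp2F1 a b c z ≤ 1 := by
  have hzabs : |z| < 1 := by rw [abs_of_nonneg hz.1]; exact hz.2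
  rw [hyp2F1_eq_tsum, (summable_hyp2F1Coeff_mul_pow a b hc hzabs).tsum_eq_zero_add,
    hyp2F1Coeff_zero, pow_zero, mul_one, add_le_iff_nonpos_right]
  refine tsum_nonpos fun k ↦ mul_nonpos_of_nonpos_of_nonneg
    (div_nonpos_of_nonpos_of_nonneg ?_ ?_) (pow_nonneg hz.1 _)
  · rw [poch_succ' b]
    exact mul_nonpos_of_nonneg_of_nonpos (poch_nonneg ha _)
      (mul_nonpos_of_nonpos_of_nonneg hb.2 (poch_nonneg (by linarith [hb.1]) _))
  · exact mul_nonneg (Nat.cast_nonneg _) (poch_nonneg hc.le _)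

lemma summable_hyp2F1Coeff_neg_half_neg_half (hc : 0 < c) :
    Summable (hyp2F1Coeff (-1 / 2) (-1 / 2) c) := by
  refine summable_hyp2F1Coeff_of_add_one hc ?_
  norm_num only
  exact (hasSum_hyp2F1Coeff_gauss (by norm_num) (by norm_num) (by linarith)).summable

lemma hasSum_hyp2F1Coeff_half_neg_half (hc : 0 < c) :
    HasSum (hyp2F1Coeff (1 / 2) (-1 / 2) c)
      (hyp2F1 (-1 / 2) (-1 / 2) c 1 - 1 / 2 * (Gamma c / Gamma (c + 1 / 2)) ^ 2) := by
  have gauss := hasSum_hyp2F1Coeff_gauss (a := 1 / 2) (b := 1 / 2) (c := c + 1) (by norm_num)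
    (by norm_num) (by linarith)
  have h := hasSum_hyp2F1_add_one_left (a := -1 / 2) (b := -1 / 2) (z := 1) hc
    (by simpa using summable_hyp2F1Coeff_neg_half_neg_half hc)
    (by norm_num only; simpa using gauss.summable)
  have hone : hyp2F1 (1 / 2) (1 / 2) (c + 1) 1 = c * (Gamma c / Gamma (c + 1 / 2)) ^ 2 := by
    rw [hyp2F1_eq_tsum]
    simp only [one_pow, mul_one, gauss.tsum_eq]
    rw [show c + 1 - 1 / 2 - 1 / 2 = c by ring, show c + 1 - 1 / 2 = c + 1 / 2 by ring,
      Gamma_add_one hc.ne']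
    ring
  norm_num only at h hone
  simp only [one_pow, mul_one, hone] at h
  norm_num only
  convert h using 1
  field_simp
  ring

end GaussSummation

section ExponentialDecay

open Set Topology

variable {f g : ℝ → ℝ} {ε p : ℝ}

lemma integrableOn_rpow_mul_of_isBigO_exp (hf : Continuous f) (hε : 0 < ε)
    (hO : f =O[𝓟 (Ici 0)] fun x ↦ exp (-ε * x)) (hp : -1 < p) :
    IntegrableOn (fun x ↦ x ^ p * f x) (Ioi 0) := by
  obtain ⟨M, hM⟩ := Asymptotics.isBigO_principal.1 hO
  have hexp := integrableOn_rpow_mul_exp_neg_mul_rpow hp one_pos hε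
  simp only [rpow_one] at hexp
  refine (hexp.const_mul M).mono' (Measurable.aestronglyMeasurable (by fun_prop)) ?_
  filter_upwards [ae_restrict_mem measurableSet_Ioi] with x hx
  have hMx : |f x| ≤ M * exp (-ε * x) := by simpa using hM x (mem_Ioi.1 hx).le
  rw [norm_mul, norm_of_nonneg (rpow_nonneg (mem_Ioi.1 hx).le p), norm_eq_abs, mul_left_comm]
  exact mul_le_mul_of_nonneg_left hMx (rpow_nonneg (mem_Ioi.1 hx).le p)

lemma tendsto_rpow_mul_of_isBigO_exp (hε : 0 < ε)
    (hO : f =O[𝓟 (Ici 0)] fun x ↦ exp (-ε * x)) (p : ℝ) :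
    Tendsto (fun x ↦ x ^ p * f x) atTop (𝓝 0) :=
  ((Asymptotics.isBigO_refl (fun x : ℝ ↦ x ^ p) atTop).mul
    (hO.mono (le_principal_iff.2 (Ici_mem_atTop 0)))).trans_tendsto
    (tendsto_rpow_mul_exp_neg_mul_atTop_nhds_zero p ε hε)

lemma integral_rpow_mul_deriv_of_isBigO_exp (hg : ContDiff ℝ 1 g) (hε : 0 < ε)
    (hO : g =O[𝓟 (Ici 0)] fun x ↦ exp (-ε * x))
    (hO' : deriv g =O[𝓟 (Ici 0)] fun x ↦ exp (-ε * x)) (hp : 0 < p) :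
    ∫ x in Ioi 0, x ^ p * deriv g x = -(p * ∫ x in Ioi 0, x ^ (p - 1) * g x) := by
  have hzero : Tendsto (fun x ↦ x ^ p * g x) (𝓝[>] 0) (𝓝 0) := by
    have : ContinuousAt (fun x ↦ x ^ p * g x) 0 :=
      (continuousAt_rpow_const 0 p (.inr hp.le)).mul hg.continuous.continuousAt
    simpa [ContinuousAt, zero_rpow hp.ne'] using this.tendsto.mono_left nhdsWithin_le_nhds
  have hint := integrableOn_rpow_mul_of_isBigO_exp hg.continuous hε hO
    (by linarith : -1 < p - 1)
  rw [integral_Ioi_mul_deriv_eq_deriv_mul (u' := fun x ↦ p * x ^ (p - 1))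
    (fun x hx ↦ hasDerivAt_rpow_const (.inl (ne_of_gt hx)))
    (fun x _ ↦ ((hg.differentiable one_ne_zero) x).hasDerivAt)
    (integrableOn_rpow_mul_of_isBigO_exp (hg.continuous_deriv le_rfl) hε hO' (by linarith))
    (by simpa only [IntegrableOn, Pi.mul_def, mul_assoc] using hint.const_mul p) hzero
    (tendsto_rpow_mul_of_isBigO_exp hε hO p)]
  simp only [mul_assoc, integral_const_mul]
  ring

lemma iterate_three_deriv_comp_sq (hg : ContDiff ℝ 3 g) (b : ℝ) :
    deriv^[3] (fun b ↦ g (b ^ 2)) b =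
      12 * b * iteratedDeriv 2 g (b ^ 2) + 8 * b ^ 3 * iteratedDeriv 3 g (b ^ 2) := by
  have hsq (n : ℕ) (hn : (n : WithTop ℕ∞) < 3) (b : ℝ) : HasDerivAt
      (fun b ↦ iteratedDeriv n g (b ^ 2)) (2 * b * iteratedDeriv (n + 1) g (b ^ 2)) b := by
    have h : HasDerivAt (iteratedDeriv n g) (iteratedDeriv (n + 1) g (b ^ 2)) (b ^ 2) := by
      simpa [iteratedDeriv_succ] using (hg.differentiable_iteratedDeriv n hn (b ^ 2)).hasDerivAt
    refine (HasDerivAt.comp b (h := fun b ↦ b ^ 2) h (hasDerivAt_pow 2 b)).congr_deriv ?_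
    push_cast
    ring
  have h₁ : deriv (fun b ↦ g (b ^ 2)) = fun b ↦ 2 * b * iteratedDeriv 1 g (b ^ 2) := by
    ext b
    simpa using (hsq 0 (by norm_num) b).deriv
  have h₂ : deriv (fun b ↦ 2 * b * iteratedDeriv 1 g (b ^ 2)) =
      fun b ↦ 2 * iteratedDeriv 1 g (b ^ 2) + 4 * b ^ 2 * iteratedDeriv 2 g (b ^ 2) := by
    ext b
    rw [(((hasDerivAt_id' b).const_mul 2).fun_mul (hsq 1 (by norm_num) b)).deriv]
    ring
  have h₃ : deriv (fun b ↦ 2 * iteratedDeriv 1 g (b ^ 2) + 4 * b ^ 2 * iteratedDeriv 2 g (b ^ 2)) b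
      = 12 * b * iteratedDeriv 2 g (b ^ 2) + 8 * b ^ 3 * iteratedDeriv 3 g (b ^ 2) := by
    rw [(((hsq 1 (by norm_num) b).const_mul 2).fun_add
      (((hasDerivAt_pow 2 b).const_mul 4).fun_mul (hsq 2 (by norm_num) b))).deriv]
    push_cast
    ring
  rw [← h₃, ← h₂, ← h₁]
  rfl

lemma rpow_mul_iterate_three_deriv_comp_sq (hg : ContDiff ℝ 3 g) (δ : ℝ) {b : ℝ} (hb : 0 < b) :
    b ^ (δ - 1) * deriv^[3] (fun b ↦ g (b ^ 2)) b =
      2 * b * (6 * ((b ^ 2) ^ ((δ + 1) / 2 - 1) * iteratedDeriv 2 g (b ^ 2)) +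
        4 * ((b ^ 2) ^ ((δ + 1) / 2) * iteratedDeriv 3 g (b ^ 2))) := by
  have hb₁ : (b ^ 2) ^ ((δ + 1) / 2 - 1) = b ^ (δ - 1) := by
    rw [← rpow_two, ← rpow_mul hb.le]
    ring_nf
  have hb₂ : (b ^ 2) ^ ((δ + 1) / 2) = b ^ (δ - 1) * b ^ 2 := by
    rw [← rpow_two, ← rpow_mul hb.le, ← rpow_add hb]
    ring_nf
  rw [iterate_three_deriv_comp_sq hg, hb₁, hb₂]
  ring

lemma integral_rpow_mul_iterate_three_deriv_comp_sq {δ : ℝ} (hg : ContDiff ℝ 3 g) (hε : 0 < ε)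
    (hO₂ : iteratedDeriv 2 g =O[𝓟 (Ici 0)] fun x ↦ exp (-ε * x))
    (hO₃ : iteratedDeriv 3 g =O[𝓟 (Ici 0)] fun x ↦ exp (-ε * x)) (hδ : -1 < δ) :
    ∫ b in Ioi 0, b ^ (δ - 1) * deriv^[3] (fun b ↦ g (b ^ 2)) b =
      -(2 * (δ - 2)) * ∫ x in Ioi 0, x ^ ((δ + 1) / 2 - 1) * iteratedDeriv 2 g x := by
  have hp : 0 < (δ + 1) / 2 := by linarith
  have hg₂ : ContDiff ℝ 1 (iteratedDeriv 2 g) := by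
    rw [iteratedDeriv_eq_iterate]
    exact (hg.iterate_deriv' 1 2)
  rw [iteratedDeriv_succ] at hO₃
  have hint₂ := integrableOn_rpow_mul_of_isBigO_exp hg₂.continuous hε hO₂
    (by linarith : -1 < (δ + 1) / 2 - 1)
  have hint₃ := integrableOn_rpow_mul_of_isBigO_exp (hg₂.continuous_deriv le_rfl) hε hO₃
    (by linarith : -1 < (δ + 1) / 2)
  calc ∫ b in Ioi 0, b ^ (δ - 1) * deriv^[3] (fun b ↦ g (b ^ 2)) b
      = ∫ b in Ioi (0 : ℝ), ((2 : ℝ) * b ^ ((2 : ℝ) - 1)) •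
          (6 * ((b ^ (2 : ℝ)) ^ ((δ + 1) / 2 - 1) * iteratedDeriv 2 g (b ^ (2 : ℝ))) +
            4 * ((b ^ (2 : ℝ)) ^ ((δ + 1) / 2) * deriv (iteratedDeriv 2 g) (b ^ (2 : ℝ)))) := by
        refine setIntegral_congr_fun measurableSet_Ioi fun b hb ↦ ?_
        rw [rpow_mul_iterate_three_deriv_comp_sq hg δ hb, iteratedDeriv_succ (n := 2)]
        norm_num
    _ = ∫ x in Ioi 0, 6 * (x ^ ((δ + 1) / 2 - 1) * iteratedDeriv 2 g x) +
          4 * (x ^ ((δ + 1) / 2) * deriv (iteratedDeriv 2 g) x) :=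
        integral_comp_rpow_Ioi_of_pos two_pos (g := fun x ↦
          6 * (x ^ ((δ + 1) / 2 - 1) * iteratedDeriv 2 g x) +
            4 * (x ^ ((δ + 1) / 2) * deriv (iteratedDeriv 2 g) x))
    _ = -(2 * (δ - 2)) * ∫ x in Ioi 0, x ^ ((δ + 1) / 2 - 1) * iteratedDeriv 2 g x := by
        rw [integral_add (hint₂.const_mul 6) (hint₃.const_mul 4), integral_const_mul,
          integral_const_mul, integral_rpow_mul_deriv_of_isBigO_exp hg₂ hε hO₂ hO₃ hp]
        ring

end ExponentialDecay

section KummerFunction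

open Set

variable {a c x ε α β p : ℝ}

/-- **Kummer's confluent hypergeometric function** `₁F₁(a, c, x) = ∑ (a)_k / ((c)_k k!) x ^ k`. -/
noncomputable def hyp1F1 (a c x : ℝ) : ℝ :=
  ∑' k : ℕ, poch a k / (poch c k * k.factorial) * x ^ k

lemma exists_abs_poch_div_poch_le (a : ℝ) (hc : 0 < c) {q : ℝ} (hq : 1 < q) :
    ∃ M, ∀ k, |poch a k / poch c k| ≤ M * q ^ k := by
  have hq₀ : 0 < q := one_pos.trans hq
  have hqinv : |q⁻¹| < 1 := by rw [abs_of_pos (inv_pos.2 hq₀)]; exact inv_lt_one_of_one_lt₀ hq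
  obtain ⟨M, hM⟩ :=
    (summable_hyp2F1Coeff_mul_pow a 1 hc hqinv).tendsto_atTop_zero.norm.bddAbove_range
  refine ⟨M, fun k ↦ ?_⟩
  have hk : ‖hyp2F1Coeff a 1 c k * q⁻¹ ^ k‖ ≤ M := hM ⟨k, rfl⟩
  have hcoeff : hyp2F1Coeff a 1 c k = poch a k / poch c k := by
    rw [hyp2F1Coeff, poch_one]
    field_simp
  rwa [hcoeff, inv_pow, ← div_eq_mul_inv, norm_div, norm_of_nonneg (pow_pos hq₀ k).le,
    div_le_iff₀ (pow_pos hq₀ k)] at hk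

lemma exists_norm_hyp1F1_term_le (a : ℝ) (hc : 0 < c) {q : ℝ} (hq : 1 < q) :
    ∃ M, ∀ x k, ‖poch a k / (poch c k * k.factorial) * x ^ k‖ ≤
      M * ((q * |x|) ^ k / k.factorial) := by
  obtain ⟨M, hM⟩ := exists_abs_poch_div_poch_le a hc hq
  refine ⟨M, fun x k ↦ ?_⟩
  calc ‖poch a k / (poch c k * k.factorial) * x ^ k‖
      = |poch a k / poch c k| * (|x| ^ k / k.factorial) := by
        rw [← div_div, norm_mul, norm_div, norm_pow, norm_natCast]
        simp only [norm_eq_abs]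
        ring
    _ ≤ M * q ^ k * (|x| ^ k / k.factorial) := by gcongr; exact hM k
    _ = M * ((q * |x|) ^ k / k.factorial) := by rw [mul_pow]; ring

lemma summable_hyp1F1_term (a : ℝ) (hc : 0 < c) (x : ℝ) :
    Summable fun k : ℕ ↦ poch a k / (poch c k * k.factorial) * x ^ k := by
  obtain ⟨M, hM⟩ := exists_norm_hyp1F1_term_le a hc one_lt_two
  exact .of_norm_bounded ((summable_pow_div_factorial (2 * |x|)).mul_left M) (hM x)

lemma exists_abs_hyp1F1_le (a : ℝ) (hc : 0 < c) {q : ℝ} (hq : 1 < q) :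
    ∃ M, ∀ x, |hyp1F1 a c x| ≤ M * exp (q * |x|) := by
  obtain ⟨M, hM⟩ := exists_norm_hyp1F1_term_le a hc hq
  refine ⟨M, fun x ↦ tsum_of_norm_bounded ?_ (hM x)⟩
  rw [exp_eq_exp_ℝ]
  exact (NormedSpace.expSeries_div_hasSum_exp (q * |x|)).mul_left M

lemma hasDerivAt_hyp1F1 (a : ℝ) (hc : 0 < c) (x : ℝ) :
    HasDerivAt (hyp1F1 a c) (a / c * hyp1F1 (a + 1) (c + 1) x) x := by
  refine (hasDerivAt_tsum_mul_pow (R := |x| + 1) (fun y _ ↦ summable_hyp1F1_term a hc y)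
    (lt_add_one _)).congr_deriv ?_
  rw [hyp1F1, ← tsum_mul_left]
  congr! 2 with k
  have := poch_pos (by linarith : (0 : ℝ) < c + 1) k
  simp only [poch_succ', Nat.factorial_succ]
  push_cast
  field_simp

lemma contDiff_hyp1F1 (a : ℝ) (hc : 0 < c) {n : WithTop ℕ∞} : ContDiff ℝ n (hyp1F1 a c) :=
  AnalyticOnNhd.contDiff fun x _ ↦
    analyticOnNhd_tsum_mul_pow (R := |x| + 1) (by positivity)
      (fun y _ ↦ summable_hyp1F1_term a hc y) x (by simp)

/-- The function `e ^ (-β x) ₁F₁(a, c, α x)`, whose Mellin transform is a Gauss hypergeometric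
function of `α / β` and whose derivatives decay exponentially as long as `|α| < β`. -/
noncomputable def dampedKummer (a c α β x : ℝ) : ℝ := exp (-β * x) * hyp1F1 a c (α * x)

lemma contDiff_dampedKummer (a : ℝ) (hc : 0 < c) (α β : ℝ) {n : WithTop ℕ∞} :
    ContDiff ℝ n (dampedKummer a c α β) := by
  have := contDiff_hyp1F1 a hc (n := n)
  unfold dampedKummer
  fun_prop

lemma deriv_dampedKummer (a : ℝ) (hc : 0 < c) (α β : ℝ) :
    deriv (dampedKummer a c α β) = fun x ↦
      -β * dampedKummer a c α β x + α * (a / c) * dampedKummer (a + 1) (c + 1) α β x := by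
  ext x
  have hexp := ((hasDerivAt_id' x).const_mul (-β)).exp
  have hkummer := (hasDerivAt_hyp1F1 a hc (α * x)).comp x ((hasDerivAt_id' x).const_mul α)
  refine (hexp.mul hkummer).deriv.trans ?_
  simp only [dampedKummer, Function.comp_apply]
  ring

lemma iteratedDeriv_succ_dampedKummer (a : ℝ) (hc : 0 < c) (α β : ℝ) (n : ℕ) (x : ℝ) :
    iteratedDeriv (n + 1) (dampedKummer a c α β) x =
      -β * iteratedDeriv n (dampedKummer a c α β) x +
        α * (a / c) * iteratedDeriv n (dampedKummer (a + 1) (c + 1) α β) x := by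
  have h₀ := (contDiff_dampedKummer a hc α β (n := n)).contDiffAt (x := x)
  have h₁ := (contDiff_dampedKummer (a + 1) (by linarith : 0 < c + 1) α β (n := n)).contDiffAt
    (x := x)
  rw [iteratedDeriv_succ', deriv_dampedKummer a hc, iteratedDeriv_fun_add
    (contDiffAt_const.mul h₀) (contDiffAt_const.mul h₁), iteratedDeriv_const_mul_field,
    iteratedDeriv_const_mul_field]

lemma isBigO_dampedKummer (a : ℝ) (hc : 0 < c) (hε : ε < β - |α|) :
    dampedKummer a c α β =O[Filter.principal (Ici 0)] fun x ↦ exp (-ε * x) := by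
  have hα : 0 < |α| + 1 := by positivity
  set q := 1 + (β - |α| - ε) / (|α| + 1)
  have hq : 1 < q := lt_add_of_pos_right 1 (div_pos (by linarith) hα)
  have hqα : q * |α| ≤ β - ε := by
    have : (β - |α| - ε) / (|α| + 1) * |α| ≤ β - |α| - ε := by
      rw [div_mul_eq_mul_div, div_le_iff₀ hα]
      nlinarith
    rw [add_mul]
    linarith
  obtain ⟨M, hM⟩ := exists_abs_hyp1F1_le a hc hq
  have hM₀ : 0 ≤ M := nonneg_of_mul_nonneg_left ((abs_nonneg _).trans (hM 0)) (exp_pos _)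
  refine Asymptotics.isBigO_principal.2 ⟨M, fun x hx ↦ ?_⟩
  have hx : 0 ≤ x := hx
  calc ‖dampedKummer a c α β x‖ = exp (-β * x) * |hyp1F1 a c (α * x)| := by
        rw [dampedKummer, norm_mul, norm_of_nonneg (exp_pos _).le, norm_eq_abs]
    _ ≤ exp (-β * x) * (M * exp (q * |α * x|)) := by gcongr; exact hM _
    _ = M * exp (-β * x + q * |α| * x) := by
        rw [exp_add, abs_mul, abs_of_nonneg hx, mul_assoc q]
        ring
    _ ≤ M * ‖exp (-ε * x)‖ := by
        rw [norm_of_nonneg (exp_pos _).le]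
        gcongr
        nlinarith

lemma isBigO_iteratedDeriv_dampedKummer (a : ℝ) (hc : 0 < c) (hε : ε < β - |α|) (n : ℕ) :
    iteratedDeriv n (dampedKummer a c α β) =O[Filter.principal (Ici 0)] fun x ↦ exp (-ε * x) := by
  induction n generalizing a c with
  | zero => simpa using isBigO_dampedKummer a hc hε
  | succ n ih =>
    simp only [funext (iteratedDeriv_succ_dampedKummer a hc α β n)]
    exact ((ih a hc).const_mul_left _).add
      ((ih (a + 1) (by linarith : 0 < c + 1)).const_mul_left _)

lemma integrableOn_rpow_mul_iteratedDeriv_dampedKummer (a : ℝ) (hc : 0 < c) (hαβ : |α| < β)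
    (hp : 0 < p) (n : ℕ) :
    IntegrableOn (fun x ↦ x ^ (p - 1) * iteratedDeriv n (dampedKummer a c α β) x) (Ioi 0) := by
  obtain ⟨ε, hε, hεβ⟩ := exists_between (sub_pos.2 hαβ)
  exact integrableOn_rpow_mul_of_isBigO_exp
    ((contDiff_dampedKummer a hc α β (n := n)).continuous_iteratedDeriv n le_rfl) hε
    (isBigO_iteratedDeriv_dampedKummer a hc hεβ n) (by linarith)

lemma integral_rpow_add_natCast_mul_exp_neg (hβ : 0 < β) (hp : 0 < p) (k : ℕ) :
    ∫ x in Ioi 0, x ^ (p + k - 1) * exp (-(β * x)) =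
      β ^ (-p) * Gamma p * (poch p k / β ^ k) := by
  rw [integral_rpow_mul_exp_neg_mul_Ioi (by positivity) hβ, add_comm p, Gamma_natCast_add hp,
    one_div, inv_rpow hβ.le, rpow_add hβ, rpow_natCast, rpow_neg hβ.le]
  field_simp

lemma integral_rpow_mul_dampedKummer (a : ℝ) (hc : 0 < c) (hαβ : |α| < β) (hp : 0 < p) :
    ∫ x in Ioi 0, x ^ (p - 1) * dampedKummer a c α β x =
      β ^ (-p) * Gamma p * hyp2F1 p a c (α / β) := by
  have hβ : 0 < β := (abs_nonneg α).trans_lt hαβ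
  set F : ℕ → ℝ → ℝ := fun k x ↦
    poch a k / (poch c k * k.factorial) * α ^ k * (x ^ (p + k - 1) * exp (-(β * x)))
  have hF_integrable (k : ℕ) : IntegrableOn (F k) (Ioi 0) :=
    (not_imp_comm.1 integral_undef ((integral_rpow_add_natCast_mul_exp_neg hβ hp k).trans_ne (by
      have := poch_pos hp k
      have := Gamma_pos_of_pos hp
      positivity))).const_mul _
  have hF_integral (k : ℕ) :
      ∫ x in Ioi 0, F k x = β ^ (-p) * Gamma p * (hyp2F1Coeff p a c k * (α / β) ^ k) := by
    rw [integral_const_mul, integral_rpow_add_natCast_mul_exp_neg hβ hp, hyp2F1Coeff, div_pow]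
    ring
  have hz : |α / β| < 1 := by rwa [abs_div, abs_of_pos hβ, div_lt_one hβ]
  have hF_norm (k : ℕ) : ∫ x in Ioi 0, ‖F k x‖ = |∫ x in Ioi 0, F k x| := by
    rw [integral_const_mul, abs_mul, abs_of_nonneg (a := ∫ _ in _, _)
      (setIntegral_nonneg measurableSet_Ioi fun x hx ↦
        mul_nonneg (rpow_nonneg (mem_Ioi.1 hx).le _) (exp_pos _).le), ← integral_const_mul]
    refine setIntegral_congr_fun measurableSet_Ioi fun x hx ↦ ?_
    rw [norm_mul, norm_eq_abs, norm_of_nonneg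
      (mul_nonneg (rpow_nonneg (mem_Ioi.1 hx).le _) (exp_pos _).le)]
  have hsum := hasSum_integral_of_summable_integral_norm hF_integrable (by
    simp only [hF_norm, hF_integral]
    exact ((summable_hyp2F1Coeff_mul_pow p a hc hz).mul_left _).abs)
  simp only [hF_integral] at hsum
  rw [hyp2F1_eq_tsum, ← tsum_mul_left, hsum.tsum_eq]
  refine setIntegral_congr_fun measurableSet_Ioi fun x hx ↦ ?_
  simp only [F, dampedKummer, hyp1F1, ← tsum_mul_left]
  congr! 2 with k
  rw [add_sub_right_comm, rpow_add hx, rpow_natCast, neg_mul]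
  ring

theorem integral_rpow_mul_iteratedDeriv_dampedKummer (a : ℝ) (hc : 0 < c) (hαβ : |α| < β)
    (hp : 0 < p) (n : ℕ) :
    ∫ x in Ioi 0, x ^ (p - 1) * iteratedDeriv n (dampedKummer a c α β) x =
      (-1) ^ n * β ^ (n - p) * Gamma p * hyp2F1 (p - n) a c (α / β) := by
  have hβ : 0 < β := (abs_nonneg α).trans_lt hαβ
  have hz : |α / β| < 1 := by rwa [abs_div, abs_of_pos hβ, div_lt_one hβ]
  induction n generalizing a c with
  | zero => simpa using integral_rpow_mul_dampedKummer a hc hαβ hp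
  | succ n ih =>
    have hc₁ : 0 < c + 1 := by linarith
    have hint₀ := integrableOn_rpow_mul_iteratedDeriv_dampedKummer a hc hαβ hp n
    have hint₁ := integrableOn_rpow_mul_iteratedDeriv_dampedKummer (a + 1) hc₁ hαβ hp n
    have contiguous := hyp2F1_add_one_left (p - (n + 1 : ℕ)) a hc hz
    rw [show p - (n + 1 : ℕ) + 1 = p - n by push_cast; ring] at contiguous
    calc ∫ x in Ioi 0, x ^ (p - 1) * iteratedDeriv (n + 1) (dampedKummer a c α β) x
        = ∫ x in Ioi 0, -β * (x ^ (p - 1) * iteratedDeriv n (dampedKummer a c α β) x) +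
            α * (a / c) *
              (x ^ (p - 1) * iteratedDeriv n (dampedKummer (a + 1) (c + 1) α β) x) := by
          congr! 2 with x
          rw [iteratedDeriv_succ_dampedKummer a hc]
          ring
      _ = (-1) ^ (n + 1) * β ^ (n - p + 1) * Gamma p *
            (hyp2F1 (p - n) a c (α / β) -
              α / β * (a / c * hyp2F1 (p - n) (a + 1) (c + 1) (α / β))) := by
          rw [integral_add (hint₀.const_mul _) (hint₁.const_mul _), integral_const_mul,
            integral_const_mul, ih a hc, ih (a + 1) hc₁, rpow_add_one hβ.ne']
          field_simp
          ring
      _ = _ := by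
          rw [contiguous, add_sub_cancel_right, Nat.cast_succ, add_sub_right_comm]

end KummerFunction

section TwoPointKernel

open Set Topology

variable {a b c δ s r : ℝ}

/-- The ratio of the odds of `s` to the odds of `r`. This is the variable `z(s, r)` of the
two-point kernel. -/
noncomputable def oddsRatio (s r : ℝ) : ℝ := s * (1 - r) / (r * (1 - s))

lemma oddsRatio_pos (hs : s ∈ Ioo 0 1) (hr : r ∈ Ioo 0 1) : 0 < oddsRatio s r :=
  div_pos (mul_pos hs.1 (sub_pos.2 hr.2)) (mul_pos hr.1 (sub_pos.2 hs.2))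

lemma one_sub_oddsRatio (hs : s ∈ Ioo 0 1) (hr : r ∈ Ioo 0 1) :
    1 - oddsRatio s r = (r - s) / (r * (1 - s)) := by
  have := hr.1.ne'
  have := (sub_pos.2 hs.2).ne'
  rw [oddsRatio, eq_div_iff (by positivity), sub_mul, div_mul_cancel₀ _ (by positivity)]
  ring

lemma oddsRatio_self (hs : s ∈ Ioo 0 1) : oddsRatio s s = 1 := by
  have h := one_sub_oddsRatio hs hs
  rw [sub_self, zero_div] at h
  exact (sub_eq_zero.1 h).symm

lemma oddsRatio_lt_one (hs : s ∈ Ioo 0 1) (hr : r ∈ Ioo 0 1) (hsr : s < r) :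
    oddsRatio s r < 1 := by
  rw [← sub_pos, one_sub_oddsRatio hs hr]
  exact div_pos (sub_pos.2 hsr) (mul_pos hr.1 (sub_pos.2 hs.2))

lemma abs_oddsRatio_lt_one (hs : s ∈ Ioo 0 1) (hr : r ∈ Ioo 0 1) (hsr : s < r) :
    |oddsRatio s r| < 1 := by
  rw [abs_of_pos (oddsRatio_pos hs hr)]
  exact oddsRatio_lt_one hs hr hsr

lemma oddsRatio_mem_Icc (hs : s ∈ Ioo 0 1) (hr : r ∈ Ioo 0 1) (hsr : s ≤ r) :
    oddsRatio s r ∈ Icc 0 1 := by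
  refine ⟨(oddsRatio_pos hs hr).le, ?_⟩
  rcases hsr.eq_or_lt with rfl | hlt
  · exact (oddsRatio_self hs).le
  · exact (oddsRatio_lt_one hs hr hlt).le

lemma oddsRatio_one_sub (s r : ℝ) : oddsRatio (1 - s) (1 - r) = oddsRatio r s := by
  simp only [oddsRatio, sub_sub_cancel, mul_comm]

lemma continuousOn_oddsRatio :
    ContinuousOn (fun x : ℝ × ℝ ↦ oddsRatio x.1 x.2) (Ioo 0 1 ×ˢ Ioo 0 1) := by
  refine ContinuousOn.div (by fun_prop) (by fun_prop) fun x hx ↦ ?_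
  exact (mul_pos hx.2.1 (sub_pos.2 hx.1.2)).ne'

lemma hasDerivAt_hyp2F1_oddsRatio (a b : ℝ) (hc : 0 < c) (hs : s ∈ Ioo 0 1) (hr : r ∈ Ioo 0 1)
    (hsr : s < r) :
    HasDerivAt (fun r ↦ hyp2F1 a b c (oddsRatio s r))
      (-(a * (hyp2F1 (a + 1) b c (oddsRatio s r) - hyp2F1 a b c (oddsRatio s r)) /
        (r * (1 - r)))) r := by
  have hr₀ := hr.1.ne'
  have hs₁ := (sub_pos.2 hs.2).ne'
  have hr₁ := (sub_pos.2 hr.2).ne'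
  have hz := abs_oddsRatio_lt_one hs hr hsr
  have hodds : HasDerivAt (oddsRatio s) (-(oddsRatio s r / (r * (1 - r)))) r := by
    refine ((((hasDerivAt_id' r).const_sub 1).const_mul s).div
      ((hasDerivAt_id' r).mul_const (1 - s)) (mul_ne_zero hr₀ hs₁)).congr_deriv ?_
    rw [oddsRatio]
    field_simp
    ring
  refine ((hasDerivAt_hyp2F1 a b hc hz).comp r hodds).congr_deriv ?_
  rw [hyp2F1_add_one_left a b hc hz]
  ring

/-- The standard deviation at time `r` of a Brownian bridge over `[0, 1]`. -/
noncomputable def brownianBridgeStd (r : ℝ) : ℝ := √(r * (1 - r))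

lemma sq_brownianBridgeStd (hr : r ∈ Ioo 0 1) : brownianBridgeStd r ^ 2 = r * (1 - r) :=
  sq_sqrt (mul_pos hr.1 (sub_pos.2 hr.2)).le

lemma brownianBridgeStd_pos (hr : r ∈ Ioo 0 1) : 0 < brownianBridgeStd r :=
  sqrt_pos.2 (mul_pos hr.1 (sub_pos.2 hr.2))

lemma brownianBridgeStd_le_one (hr : r ∈ Ioo 0 1) : brownianBridgeStd r ≤ 1 :=
  sqrt_le_one.2 (mul_le_one₀ hr.2.le (sub_pos.2 hr.2).le (by linarith [hr.1]))

lemma brownianBridgeStd_one_sub (r : ℝ) : brownianBridgeStd (1 - r) = brownianBridgeStd r := by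
  rw [brownianBridgeStd, brownianBridgeStd, sub_sub_cancel, mul_comm]

lemma continuous_brownianBridgeStd : Continuous brownianBridgeStd := by
  unfold brownianBridgeStd
  fun_prop

lemma hasDerivAt_brownianBridgeStd (hr : r ∈ Ioo 0 1) :
    HasDerivAt brownianBridgeStd ((1 - 2 * r) / (2 * brownianBridgeStd r)) r := by
  have hpos : r * (1 - r) ≠ 0 := (mul_pos hr.1 (sub_pos.2 hr.2)).ne'
  refine (((hasDerivAt_id' r).fun_mul ((hasDerivAt_id' r).const_sub 1)).sqrt hpos).congr_deriv ?_
  rw [brownianBridgeStd]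
  ring

lemma hasDerivAt_deriv_brownianBridgeStd (hr : r ∈ Ioo 0 1) :
    HasDerivAt (fun r ↦ (1 - 2 * r) / (2 * brownianBridgeStd r))
      (-(1 / (4 * brownianBridgeStd r ^ 3))) r := by
  have hu := (brownianBridgeStd_pos hr).ne'
  refine ((((hasDerivAt_id' r).const_mul 2).const_sub 1).div
    ((hasDerivAt_brownianBridgeStd hr).const_mul 2) (by positivity)).congr_deriv ?_
  field_simp
  rw [sq_brownianBridgeStd hr]
  ring

/-- The two-point kernel in the form given by Euler's transformation, with its continuous extension
to the diagonal. -/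
noncomputable def bridgeKernel (δ s r : ℝ) : ℝ :=
  Kcoef δ * brownianBridgeStd s * brownianBridgeStd r *
    hyp2F1 (-1 / 2) (-1 / 2) (δ / 2) (oddsRatio (min s r) (max s r))

lemma bridgeKernel_of_le (hsr : s ≤ r) :
    bridgeKernel δ s r = Kcoef δ * brownianBridgeStd s * brownianBridgeStd r *
      hyp2F1 (-1 / 2) (-1 / 2) (δ / 2) (oddsRatio s r) := by
  rw [bridgeKernel, min_eq_left hsr, max_eq_right hsr]

lemma bridgeKernel_comm (δ s r : ℝ) : bridgeKernel δ s r = bridgeKernel δ r s := by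
  rw [bridgeKernel, bridgeKernel, min_comm, max_comm, mul_right_comm (Kcoef δ)]

lemma bridgeKernel_one_sub (δ s r : ℝ) :
    bridgeKernel δ (1 - s) (1 - r) = bridgeKernel δ s r := by
  simp only [bridgeKernel, brownianBridgeStd_one_sub, min_sub_sub_left, max_sub_sub_left,
    oddsRatio_one_sub]

lemma twoPt_comm (δ : ℝ) (hsr : s ≠ r) : twoPt δ s r = twoPt δ r s := by
  rcases hsr.lt_or_gt with h | h <;> simp only [twoPt, h, h.not_gt, if_true, if_false]

lemma twoPt_eq_bridgeKernel (hδ : 0 < δ) (hs : s ∈ Ioo 0 1) (hr : r ∈ Ioo 0 1) (hsr : s ≠ r) :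
    twoPt δ s r = bridgeKernel δ s r := by
  wlog hlt : s < r generalizing s r
  · rw [twoPt_comm δ hsr, bridgeKernel_comm,
      this hr hs hsr.symm (hsr.symm.lt_of_le (not_lt.1 hlt))]
  have hs₀ : 0 < s := hs.1
  have hr₀ : 0 < r := hr.1
  have hs₁ : 0 < 1 - s := sub_pos.2 hs.2
  have hr₁ : 0 < 1 - r := sub_pos.2 hr.2
  have hrs : 0 < r - s := sub_pos.2 hlt
  have hpow : (r - s) ^ (δ / 2 + 1) * (s * (1 - r)) ^ (1 / 2 : ℝ) *
      (r * (1 - s)) ^ (-((δ + 1) / 2)) * ((r - s) / (r * (1 - s))) ^ (-(δ / 2 + 1)) =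
      brownianBridgeStd s * brownianBridgeStd r := by
    unfold brownianBridgeStd
    refine log_injOn_pos (mem_Ioi.2 (by positivity)) (mem_Ioi.2 (by positivity)) ?_
    simp (disch := positivity) only [log_mul, log_div, log_rpow, log_sqrt]
    ring
  have euler : hyp2F1 ((δ + 1) / 2) ((δ + 1) / 2) (δ / 2) (oddsRatio s r) =
      ((r - s) / (r * (1 - s))) ^ (-(δ / 2 + 1)) *
        hyp2F1 (-1 / 2) (-1 / 2) (δ / 2) (oddsRatio s r) := by
    rw [hyp2F1_euler _ _ (by positivity) (abs_oddsRatio_lt_one hs hr hlt), one_sub_oddsRatio hs hr]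
    congr 2 <;> ring
  rw [twoPt, if_pos hlt, ← oddsRatio, euler, bridgeKernel_of_le hlt.le, mul_assoc (Kcoef δ)
    (brownianBridgeStd s), ← hpow]
  ring

lemma continuousOn_hyp2F1_neg_half_neg_half (hc : 0 < c) :
    ContinuousOn (hyp2F1 (-1 / 2) (-1 / 2) c) (Icc 0 1) :=
  continuousOn_tsum_mul_pow (summable_hyp2F1Coeff_neg_half_neg_half hc)

lemma continuousOn_hyp2F1_half_neg_half (hc : 0 < c) :
    ContinuousOn (hyp2F1 (1 / 2) (-1 / 2) c) (Icc 0 1) :=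
  continuousOn_tsum_mul_pow (hasSum_hyp2F1Coeff_half_neg_half hc).summable

lemma continuousOn_bridgeKernel (hδ : 0 < δ) :
    ContinuousOn (fun x : ℝ × ℝ ↦ bridgeKernel δ x.1 x.2) (Ioo 0 1 ×ˢ Ioo 0 1) := by
  have hmin {x : ℝ × ℝ} (hx : x ∈ Ioo (0 : ℝ) 1 ×ˢ Ioo (0 : ℝ) 1) :
      (min x.1 x.2, max x.1 x.2) ∈ Ioo (0 : ℝ) 1 ×ˢ Ioo (0 : ℝ) 1 := by
    simp only [mem_prod, mem_Ioo, lt_min_iff, max_lt_iff, min_lt_iff, lt_max_iff] at hx ⊢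
    tauto
  have hodds := continuousOn_oddsRatio.comp
    (by fun_prop : ContinuousOn (fun x : ℝ × ℝ ↦ (min x.1 x.2, max x.1 x.2)) _) fun _ ↦ hmin
  have hu := continuous_brownianBridgeStd
  exact ContinuousOn.mul (by fun_prop)
    ((continuousOn_hyp2F1_neg_half_neg_half (by positivity)).comp hodds fun x hx ↦
      oddsRatio_mem_Icc (hmin hx).1 (hmin hx).2 min_le_max)

lemma exists_abs_bridgeKernel_le (hδ : 0 < δ) :
    ∃ M, ∀ s ∈ Ioo (0 : ℝ) 1, ∀ r ∈ Ioo (0 : ℝ) 1, |bridgeKernel δ s r| ≤ M := by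
  obtain ⟨M, hM⟩ := isCompact_Icc.exists_bound_of_continuousOn
    (continuousOn_hyp2F1_neg_half_neg_half (by positivity : 0 < δ / 2))
  refine ⟨|Kcoef δ| * 1 * 1 * M, fun s hs r hr ↦ ?_⟩
  wlog hsr : s ≤ r generalizing s r
  · rw [bridgeKernel_comm]
    exact this r hr s hs (le_of_not_ge hsr)
  rw [bridgeKernel_of_le hsr, abs_mul, abs_mul, abs_mul, abs_of_pos (brownianBridgeStd_pos hs),
    abs_of_pos (brownianBridgeStd_pos hr)]
  gcongr
  · exact (brownianBridgeStd_pos hr).le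
  · exact brownianBridgeStd_le_one hs
  · exact brownianBridgeStd_le_one hr
  · exact hM _ (oddsRatio_mem_Icc hs hr hsr)

end TwoPointKernel

section KernelDerivatives

open Set Topology

variable {δ s r t : ℝ}

/-- The derivative of `bridgeKernel δ s` at `r > s`, with its continuous extension to `r = s`. -/
noncomputable def bridgeKernelDeriv (δ s r : ℝ) : ℝ :=
  Kcoef δ * brownianBridgeStd s *
    ((hyp2F1 (1 / 2) (-1 / 2) (δ / 2) (oddsRatio s r) / 2 -
      r * hyp2F1 (-1 / 2) (-1 / 2) (δ / 2) (oddsRatio s r)) / brownianBridgeStd r)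

/-- The second derivative of `bridgeKernel δ s` at `r > s`. -/
noncomputable def bridgeKernelDeriv₂ (δ s r : ℝ) : ℝ :=
  -(Kcoef δ * brownianBridgeStd s *
    (hyp2F1 (3 / 2) (-1 / 2) (δ / 2) (oddsRatio s r) / (4 * brownianBridgeStd r ^ 3)))

lemma hasDerivAt_bridgeKernel (hδ : 0 < δ) (hs : s ∈ Ioo 0 1) (hr : r ∈ Ioo 0 1) (hsr : s < r) :
    HasDerivAt (bridgeKernel δ s) (bridgeKernelDeriv δ s r) r := by
  have hu := (brownianBridgeStd_pos hr).ne'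
  have hA := hasDerivAt_hyp2F1_oddsRatio (-1 / 2) (-1 / 2) (half_pos hδ) hs hr hsr
  rw [show (-1 / 2 : ℝ) + 1 = 1 / 2 by norm_num] at hA
  have hlocal : bridgeKernel δ s =ᶠ[𝓝 r] fun r ↦ Kcoef δ * brownianBridgeStd s *
      (brownianBridgeStd r * hyp2F1 (-1 / 2) (-1 / 2) (δ / 2) (oddsRatio s r)) := by
    filter_upwards [lt_mem_nhds hsr] with x hx
    rw [bridgeKernel_of_le hx.le, mul_assoc _ (brownianBridgeStd x)]
  refine ((((hasDerivAt_brownianBridgeStd hr).mul hA).const_mul _).congr_deriv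
    ?_).congr_of_eventuallyEq hlocal
  rw [bridgeKernelDeriv, ← sq_brownianBridgeStd hr]
  field_simp
  ring

lemma hasDerivAt_bridgeKernelDeriv (hδ : 0 < δ) (hs : s ∈ Ioo 0 1) (hr : r ∈ Ioo 0 1)
    (hsr : s < r) : HasDerivAt (bridgeKernelDeriv δ s) (bridgeKernelDeriv₂ δ s r) r := by
  have hu := (brownianBridgeStd_pos hr).ne'
  have hA := hasDerivAt_hyp2F1_oddsRatio (-1 / 2) (-1 / 2) (half_pos hδ) hs hr hsr
  have hB := hasDerivAt_hyp2F1_oddsRatio (1 / 2) (-1 / 2) (half_pos hδ) hs hr hsr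
  rw [show (-1 / 2 : ℝ) + 1 = 1 / 2 by norm_num] at hA
  rw [show (1 / 2 : ℝ) + 1 = 3 / 2 by norm_num] at hB
  refine ((((hB.div_const 2).fun_sub ((hasDerivAt_id' r).fun_mul hA)).div
    (hasDerivAt_brownianBridgeStd hr) hu).const_mul _).congr_deriv ?_
  rw [bridgeKernelDeriv₂, ← sq_brownianBridgeStd hr]
  generalize hyp2F1 (-1 / 2) (-1 / 2) (δ / 2) (oddsRatio s r) = A
  field_simp
  linear_combination -(16 * Kcoef δ * brownianBridgeStd s * A) * sq_brownianBridgeStd hr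

lemma bridgeKernelDeriv_self (hs : s ∈ Ioo 0 1) :
    bridgeKernelDeriv δ s s = Kcoef δ *
      (hyp2F1 (1 / 2) (-1 / 2) (δ / 2) 1 / 2 - s * hyp2F1 (-1 / 2) (-1 / 2) (δ / 2) 1) := by
  have := (brownianBridgeStd_pos hs).ne'
  rw [bridgeKernelDeriv, oddsRatio_self hs]
  field_simp

lemma Kcoef_mul_hyp2F1_sub_hyp2F1 (hδ : 0 < δ) :
    Kcoef δ * (hyp2F1 (1 / 2) (-1 / 2) (δ / 2) 1 - hyp2F1 (-1 / 2) (-1 / 2) (δ / 2) 1) = -1 := by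
  have gauss := (hasSum_hyp2F1Coeff_half_neg_half (half_pos hδ)).tsum_eq
  have := (Gamma_pos_of_pos (half_pos hδ)).ne'
  have := (Gamma_pos_of_pos (by linarith : 0 < (δ + 1) / 2)).ne'
  rw [add_div] at this
  rw [hyp2F1_eq_tsum (1 / 2)]
  simp only [one_pow, mul_one, gauss]
  rw [Kcoef, add_div]
  field_simp
  ring

lemma continuousOn_bridgeKernel_right (hδ : 0 < δ) (hs : s ∈ Ioo 0 1) :
    ContinuousOn (bridgeKernel δ s) (Ico s 1) :=
  (continuousOn_bridgeKernel hδ).comp (by fun_prop : ContinuousOn (fun r ↦ (s, r)) _)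
    fun _ hr ↦ ⟨hs, hs.1.trans_le hr.1, hr.2⟩

lemma continuousOn_bridgeKernelDeriv (hδ : 0 < δ) (hs : s ∈ Ioo 0 1) :
    ContinuousOn (bridgeKernelDeriv δ s) (Ico s 1) := by
  have hIoo {r : ℝ} (hr : r ∈ Ico s 1) : r ∈ Ioo (0 : ℝ) 1 := ⟨hs.1.trans_le hr.1, hr.2⟩
  have hodds : ContinuousOn (oddsRatio s) (Ico s 1) :=
    continuousOn_oddsRatio.comp (by fun_prop : ContinuousOn (fun r ↦ (s, r)) _)
      fun _ hr ↦ ⟨hs, hIoo hr⟩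
  have hmaps : MapsTo (oddsRatio s) (Ico s 1) (Icc 0 1) :=
    fun _ hr ↦ oddsRatio_mem_Icc hs (hIoo hr) hr.1
  exact continuousOn_const.mul ((((continuousOn_hyp2F1_half_neg_half (half_pos hδ)).comp hodds
    hmaps).div_const 2).sub (continuousOn_id.mul
      ((continuousOn_hyp2F1_neg_half_neg_half (half_pos hδ)).comp hodds hmaps)) |>.div
      continuous_brownianBridgeStd.continuousOn fun r hr ↦ (brownianBridgeStd_pos (hIoo hr)).ne')

lemma le_bridgeKernelDeriv₂ (hδ : 0 < δ) (hs : s ∈ Ioo 0 1) (hr : r ∈ Ioo 0 1) (hsr : s < r) :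
    Kcoef δ * brownianBridgeStd s * -(1 / (4 * brownianBridgeStd r ^ 3)) ≤
      bridgeKernelDeriv₂ δ s r := by
  have := brownianBridgeStd_pos hs
  have := brownianBridgeStd_pos hr
  have hK : 0 ≤ Kcoef δ := by unfold Kcoef; positivity
  have hF : hyp2F1 (3 / 2) (-1 / 2) (δ / 2) (oddsRatio s r) ≤ 1 :=
    hyp2F1_le_one (by norm_num) (by norm_num) (half_pos hδ)
      ⟨(oddsRatio_pos hs hr).le, oddsRatio_lt_one hs hr hsr⟩
  rw [bridgeKernelDeriv₂, mul_neg, neg_le_neg_iff]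
  gcongr

-- The second derivative may be singular at the diagonal. Subtracting its value for `₂F₁ ≡ 1`, which
-- is smooth there, leaves a derivative of constant sign, which is integrable without any estimate.
lemma intervalIntegrable_bridgeKernelDeriv₂ (hδ : 0 < δ) (hs : s ∈ Ioo 0 1) (ht : t ∈ Ioo s 1) :
    IntervalIntegrable (bridgeKernelDeriv₂ δ s) volume s t := by
  have hIoo {r : ℝ} (hr : r ∈ Icc s t) : r ∈ Ioo (0 : ℝ) 1 :=
    ⟨hs.1.trans_le hr.1, hr.2.trans_lt ht.2⟩
  have hu_ne (r : ℝ) (hr : r ∈ Icc s t) : brownianBridgeStd r ≠ 0 :=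
    (brownianBridgeStd_pos (hIoo hr)).ne'
  have hu := continuous_brownianBridgeStd.continuousOn (s := Icc s t)
  have hcont : ContinuousOn (fun r ↦ bridgeKernelDeriv δ s r -
      Kcoef δ * brownianBridgeStd s * ((1 - 2 * r) / (2 * brownianBridgeStd r))) (Icc s t) :=
    ((continuousOn_bridgeKernelDeriv hδ hs).mono fun r hr ↦ ⟨hr.1, hr.2.trans_lt ht.2⟩).sub
      (continuousOn_const.mul ((by fun_prop : ContinuousOn (fun r : ℝ ↦ 1 - 2 * r) _).div
        (by fun_prop) fun r hr ↦ mul_ne_zero two_ne_zero (hu_ne r hr)))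
  have hsmooth : IntervalIntegrable (fun r ↦ Kcoef δ * brownianBridgeStd s *
      -(1 / (4 * brownianBridgeStd r ^ 3))) volume s t :=
    ContinuousOn.intervalIntegrable_of_Icc ht.1.le (continuousOn_const.mul (continuousOn_const.div
      (by fun_prop) fun r hr ↦ mul_ne_zero four_ne_zero (pow_ne_zero 3 (hu_ne r hr))).neg)
  have hdiff : IntervalIntegrable (fun r ↦ bridgeKernelDeriv₂ δ s r - Kcoef δ *
      brownianBridgeStd s * -(1 / (4 * brownianBridgeStd r ^ 3))) volume s t := by
    rw [intervalIntegrable_iff_integrableOn_Ioc_of_le ht.1.le]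
    refine intervalIntegral.integrableOn_deriv_of_nonneg hcont (fun r hr ↦ ?_) fun r hr ↦ ?_
    · have hr01 := hIoo (Ioo_subset_Icc_self hr)
      exact (hasDerivAt_bridgeKernelDeriv hδ hs hr01 hr.1).sub
        ((hasDerivAt_deriv_brownianBridgeStd hr01).const_mul _)
    · exact sub_nonneg.2 (le_bridgeKernelDeriv₂ hδ hs (hIoo (Ioo_subset_Icc_self hr)) hr.1)
  simpa using hdiff.add hsmooth

end KernelDerivatives

section DensityWeightedExpectation

open Set

variable {δ s r : ℝ}

lemma Ccoef_eq (hδ : 0 < δ) (k : ℕ) :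
    Ccoef δ k = Gamma ((δ + 1) / 2) / Gamma (δ / 2) ^ 2 *
      (poch ((δ + 1) / 2) k / (poch (δ / 2) k * k.factorial)) := by
  have := (Gamma_pos_of_pos (half_pos hδ)).ne'
  rw [Ccoef, Gamma_natCast_add (by linarith : 0 < (δ + 1) / 2), Gamma_natCast_add (half_pos hδ)]
  field_simp

lemma fcoef_eq_mul_pow (hs : 0 < s) (hsr : s < r) (k : ℕ) :
    fcoef s r k = (2 * (r - s)) ^ (1 / 2 : ℝ) * (s / r) ^ (1 / 2 : ℝ) *
      (s / (2 * r * (r - s))) ^ k := by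
  have hr : 0 < r := hs.trans hsr
  have hrs : 0 < r - s := sub_pos.2 hsr
  rw [fcoef, if_pos hsr, rpow_sub (by positivity), rpow_add (by positivity), rpow_natCast,
    rpow_natCast, show s / (2 * r * (r - s)) = s / r / (2 * (r - s)) by field_simp, div_pow (s / r)]
  ring

lemma SigmaRS_eq_dampedKummer (hδ : 0 < δ) (hs : 0 < s) (hsr : s < r) (b : ℝ) :
    SigmaRS δ r s b = (2 ^ (δ / 2 - 1) * (r * (1 - r)) ^ (δ / 2))⁻¹ *
      (Gamma ((δ + 1) / 2) / Gamma (δ / 2) ^ 2) *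
      ((2 * (r - s)) ^ (1 / 2 : ℝ) * (s / r) ^ (1 / 2 : ℝ)) *
      dampedKummer ((δ + 1) / 2) (δ / 2) (s / (2 * r * (r - s)))
        ((1 - s) / (2 * (r - s) * (1 - r))) (b ^ 2) := by
  have hterm (k : ℕ) : Ccoef δ k * fcoef s r k * b ^ (2 * k) =
      Gamma ((δ + 1) / 2) / Gamma (δ / 2) ^ 2 *
        ((2 * (r - s)) ^ (1 / 2 : ℝ) * (s / r) ^ (1 / 2 : ℝ)) *
        (poch ((δ + 1) / 2) k / (poch (δ / 2) k * k.factorial) *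
          (s / (2 * r * (r - s)) * b ^ 2) ^ k) := by
    rw [Ccoef_eq hδ, fcoef_eq_mul_pow hs hsr, pow_mul, mul_pow]
    ring
  have hexp : -(Dcoef s r) * b ^ 2 / 2 = -((1 - s) / (2 * (r - s) * (1 - r))) * b ^ 2 := by
    rw [Dcoef, if_pos hsr, mul_assoc 2, mul_comm 2, ← div_div (1 - s) (_ * _)]
    ring
  rw [SigmaRS, tsum_congr hterm, tsum_mul_left, hexp, dampedKummer, hyp1F1]
  ring

lemma SigmaRS_one_sub (δ : ℝ) (hsr : s ≠ r) : SigmaRS δ (1 - r) (1 - s) = SigmaRS δ r s := by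
  have hD : Dcoef (1 - s) (1 - r) = Dcoef s r := by
    rcases hsr.lt_or_gt with h | h <;> simp [Dcoef, h, h.not_gt, mul_comm]
  have hf (k : ℕ) : fcoef (1 - s) (1 - r) k = fcoef s r k := by
    rcases hsr.lt_or_gt with h | h <;> simp [fcoef, h, h.not_gt]
  ext b
  simp only [SigmaRS, hD, hf, sub_sub_cancel, mul_comm (1 - r)]

lemma integral_rpow_mul_iterate_three_deriv_dampedKummer_comp_sq {a c α β : ℝ} (hc : 0 < c)
    (hαβ : |α| < β) (hδ : -1 < δ) :
    ∫ b in Ioi 0, b ^ (δ - 1) * deriv^[3] (fun b ↦ dampedKummer a c α β (b ^ 2)) b =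
      -(2 * (δ - 2)) * (β ^ (2 - (δ + 1) / 2) * Gamma ((δ + 1) / 2) *
        hyp2F1 ((δ + 1) / 2 - 2) a c (α / β)) := by
  obtain ⟨ε, hε, hεβ⟩ := exists_between (sub_pos.2 hαβ)
  have hO := isBigO_iteratedDeriv_dampedKummer a hc hεβ
  rw [integral_rpow_mul_iterate_three_deriv_comp_sq (contDiff_dampedKummer a hc α β) hε (hO 2)
    (hO 3) hδ, integral_rpow_mul_iteratedDeriv_dampedKummer a hc hαβ (by linarith)]
  norm_num

theorem integral_rpow_mul_iterate_three_deriv_SigmaRS (hδ : 0 < δ) (hs : s ∈ Ioo 0 1)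
    (hr : r ∈ Ioo 0 1) (hsr : s < r) :
    ∫ b in Ioi 0, b ^ (δ - 1) * deriv^[3] (SigmaRS δ r s) b =
      4 * (δ - 2) * bridgeKernelDeriv₂ δ s r := by
  have hs₀ : 0 < s := hs.1
  have hr₀ : 0 < r := hr.1
  have hs₁ : 0 < 1 - s := sub_pos.2 hs.2
  have hr₁ : 0 < 1 - r := sub_pos.2 hr.2
  have hrs : 0 < r - s := sub_pos.2 hsr
  set α := s / (2 * r * (r - s)) with α_def
  set β := (1 - s) / (2 * (r - s) * (1 - r)) with β_def
  have hz : α / β = oddsRatio s r := by rw [α_def, β_def, oddsRatio]; field_simp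
  have hαβ : |α| < β := by
    rw [abs_of_pos (by positivity), ← div_lt_one (by positivity), hz]
    exact oddsRatio_lt_one hs hr hsr
  have euler : hyp2F1 ((δ + 1) / 2 - 2) ((δ + 1) / 2) (δ / 2) (oddsRatio s r) =
      ((r - s) / (r * (1 - s))) ^ (1 - δ / 2) *
        hyp2F1 (3 / 2) (-1 / 2) (δ / 2) (oddsRatio s r) := by
    rw [hyp2F1_euler _ _ (half_pos hδ) (abs_oddsRatio_lt_one hs hr hsr), one_sub_oddsRatio hs hr]
    congr 2 <;> ring
  have hpow : (2 ^ (δ / 2 - 1) * (r * (1 - r)) ^ (δ / 2))⁻¹ *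
      ((2 * (r - s)) ^ (1 / 2 : ℝ) * (s / r) ^ (1 / 2 : ℝ)) * β ^ (2 - (δ + 1) / 2) *
      ((r - s) / (r * (1 - s))) ^ (1 - δ / 2) =
      brownianBridgeStd s / brownianBridgeStd r ^ 3 := by
    rw [brownianBridgeStd, brownianBridgeStd, β_def]
    refine log_injOn_pos (mem_Ioi.2 (by positivity)) (mem_Ioi.2 (by positivity)) ?_
    simp (disch := positivity) only [log_mul, log_div, log_rpow, log_sqrt, log_inv, log_pow]
    ring
  simp only [funext (SigmaRS_eq_dampedKummer hδ hs₀ hsr), ← iteratedDeriv_eq_iterate,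
    iteratedDeriv_const_mul_field, mul_left_comm (_ ^ (δ - 1)), integral_const_mul]
  rw [iteratedDeriv_eq_iterate, integral_rpow_mul_iterate_three_deriv_dampedKummer_comp_sq
    (half_pos hδ) hαβ (by linarith), hz, euler, bridgeKernelDeriv₂, Kcoef]
  linear_combination -(2 * (δ - 2)) * (Gamma ((δ + 1) / 2) ^ 2 / Gamma (δ / 2) ^ 2) *
    hyp2F1 (3 / 2) (-1 / 2) (δ / 2) (oddsRatio s r) * hpow

end DensityWeightedExpectation

section IntegrationByParts

open Set Topology intervalIntegral

variable {f g g' g'' h : ℝ → ℝ} {e s t : ℝ}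

lemma exists_mem_Ioo_forall_Icc_notMem_tsupport (he : e ∉ tsupport f) (hse : s < e) :
    ∃ t ∈ Ioo s e, ∀ x ∈ Icc t e, x ∉ tsupport f := by
  obtain ⟨l, hl, hle⟩ :=
    exists_Ioc_subset_of_mem_nhds ((isClosed_tsupport f).isOpen_compl.mem_nhds he) ⟨s, hse⟩
  obtain ⟨t, hlt, hte⟩ := exists_between (max_lt hl hse)
  exact ⟨t, ⟨(le_max_right _ _).trans_lt hlt, hte⟩,
    fun x hx ↦ hle ⟨(le_max_left _ _).trans_lt (hlt.trans_le hx.1), hx.2⟩⟩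

lemma intervalIntegrable_mul_of_notMem_tsupport (hse : s < e) (hf : Continuous f)
    (he : e ∉ tsupport f) (hg : ∀ t ∈ Ioo s e, IntervalIntegrable g volume s t) :
    IntervalIntegrable (fun r ↦ f r * g r) volume s e := by
  obtain ⟨t, ht, hzero⟩ := exists_mem_Ioo_forall_Icc_notMem_tsupport he hse
  refine ((hg t ht).continuousOn_mul hf.continuousOn).trans
    (IntervalIntegrable.zero.congr_uIoo fun r hr ↦ ?_)
  rw [uIoo_of_le ht.2.le] at hr
  simp [image_eq_zero_of_notMem_tsupport (hzero r (Ioo_subset_Icc_self hr))]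

lemma integral_eq_of_forall_Icc_eq_zero (hst : s ≤ t) (hte : t ≤ e)
    (hzero : ∀ r ∈ Icc t e, f r = 0) : ∫ r in s..e, f r = ∫ r in s..t, f r := by
  rw [integral_of_le (hst.trans hte), integral_of_le hst]
  refine setIntegral_eq_of_subset_of_forall_sdiff_eq_zero measurableSet_Ioc
    (Ioc_subset_Ioc_right hte) fun r hr ↦ hzero r ⟨?_, hr.1.2⟩
  by_contra! hrt
  exact hr.2 ⟨hr.1.1, hrt.le⟩

theorem integral_deriv_deriv_mul_eq (hst : s ≤ t) (hh : ContDiff ℝ 2 h)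
    (hg : ContinuousOn g (Icc s t)) (hg' : ContinuousOn g' (Icc s t))
    (hgg' : ∀ r ∈ Ioo s t, HasDerivAt g (g' r) r)
    (hg'g'' : ∀ r ∈ Ioo s t, HasDerivAt g' (g'' r) r) (hint : IntervalIntegrable g'' volume s t) :
    ∫ r in s..t, deriv (deriv h) r * g r =
      deriv h t * g t - h t * g' t - (deriv h s * g s - h s * g' s) +
        ∫ r in s..t, h r * g'' r := by
  have hh' : ContDiff ℝ 1 (deriv h) := hh.deriv'
  have hderiv (r : ℝ) : HasDerivAt h (deriv h r) r :=
    (hh.differentiable two_ne_zero r).hasDerivAt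
  have hderiv' (r : ℝ) : HasDerivAt (deriv h) (deriv (deriv h) r) r :=
    (hh'.differentiable one_ne_zero r).hasDerivAt
  rw [← uIcc_of_le hst] at hg hg'
  have first := integral_mul_deriv_eq_deriv_mul_of_hasDerivAt (a := s) (b := t) hg
    hh'.continuous.continuousOn (by simpa [hst] using hgg') (fun r _ ↦ hderiv' r)
    hg'.intervalIntegrable (hh'.continuous_deriv_one.intervalIntegrable s t)
  have second := integral_mul_deriv_eq_deriv_mul_of_hasDerivAt (a := s) (b := t) hg'
    hh.continuous.continuousOn (by simpa [hst] using hg'g'') (fun r _ ↦ hderiv r)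
    hint (hh'.continuous.intervalIntegrable s t)
  simp only [mul_comm (deriv (deriv h) _), mul_comm (h _) (g'' _)]
  rw [first, second]
  ring

theorem integral_deriv_deriv_mul_of_notMem_tsupport (hse : s < e) (hh : ContDiff ℝ 2 h)
    (he : e ∉ tsupport h) (hg : ContinuousOn g (Ico s e)) (hg' : ContinuousOn g' (Ico s e))
    (hgg' : ∀ r ∈ Ioo s e, HasDerivAt g (g' r) r)
    (hg'g'' : ∀ r ∈ Ioo s e, HasDerivAt g' (g'' r) r)
    (hint : ∀ t ∈ Ioo s e, IntervalIntegrable g'' volume s t) :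
    ∫ r in s..e, deriv (deriv h) r * g r =
      h s * g' s - deriv h s * g s + ∫ r in s..e, h r * g'' r := by
  obtain ⟨t, ht, hzero⟩ := exists_mem_Ioo_forall_Icc_notMem_tsupport he hse
  have hh₀ {r : ℝ} (hr : r ∈ Icc t e) : h r = 0 := image_eq_zero_of_notMem_tsupport (hzero r hr)
  have hh₁ {r : ℝ} (hr : r ∈ Icc t e) : deriv h r = 0 :=
    image_eq_zero_of_notMem_tsupport fun hr' ↦ hzero r hr (tsupport_deriv_subset hr')
  have hh₂ {r : ℝ} (hr : r ∈ Icc t e) : deriv (deriv h) r = 0 :=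
    image_eq_zero_of_notMem_tsupport fun hr' ↦
      hzero r hr (tsupport_deriv_subset (tsupport_deriv_subset hr'))
  have hIcc : Icc s t ⊆ Ico s e := fun r hr ↦ ⟨hr.1, hr.2.trans_lt ht.2⟩
  have hIoo : Ioo s t ⊆ Ioo s e := Ioo_subset_Ioo_right ht.2.le
  have hte : t ∈ Icc t e := left_mem_Icc.2 ht.2.le
  rw [integral_eq_of_forall_Icc_eq_zero ht.1.le ht.2.le fun r hr ↦ by rw [hh₂ hr, zero_mul],
    integral_eq_of_forall_Icc_eq_zero ht.1.le ht.2.le fun r hr ↦ by rw [hh₀ hr, zero_mul],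
    integral_deriv_deriv_mul_eq ht.1.le hh (hg.mono hIcc) (hg'.mono hIcc)
      (fun r hr ↦ hgg' r (hIoo hr)) (fun r hr ↦ hg'g'' r (hIoo hr)) (hint t ht),
    hh₀ hte, hh₁ hte]
  ring

lemma integral_zero_one_eq_add (hright : IntervalIntegrable f volume s 1)
    (hleft : IntervalIntegrable (fun r ↦ f (1 - r)) volume (1 - s) 1) :
    ∫ r in 0..1, f r = (∫ r in s..1, f r) + ∫ r in (1 - s)..1, f (1 - r) := by
  have hleft' : IntervalIntegrable f volume 0 s := by simpa using (hleft.comp_sub_left 1).symm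
  rw [integral_comp_sub_left, sub_self, sub_sub_cancel, add_comm,
    integral_add_adjacent_intervals hleft' hright]

end IntegrationByParts

section BridgeIntegrationByParts

open Set

variable {δ s r : ℝ} {f φ ψ h : ℝ → ℝ}

lemma integral_deriv_deriv_mul_bridgeKernel (hδ : 0 < δ) (hs : s ∈ Ioo 0 1) (hh : ContDiff ℝ 2 h)
    (h1 : 1 ∉ tsupport h) :
    ∫ r in s..1, deriv (deriv h) r * bridgeKernel δ s r =
      h s * bridgeKernelDeriv δ s s - deriv h s * bridgeKernel δ s s +
        ∫ r in s..1, h r * bridgeKernelDeriv₂ δ s r := by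
  have hIoo {r : ℝ} (hr : r ∈ Ioo s 1) : r ∈ Ioo (0 : ℝ) 1 := ⟨hs.1.trans hr.1, hr.2⟩
  exact integral_deriv_deriv_mul_of_notMem_tsupport hs.2 hh h1
    (continuousOn_bridgeKernel_right hδ hs) (continuousOn_bridgeKernelDeriv hδ hs)
    (fun r hr ↦ hasDerivAt_bridgeKernel hδ hs (hIoo hr) hr.1)
    (fun r hr ↦ hasDerivAt_bridgeKernelDeriv hδ hs (hIoo hr) hr.1)
    fun t ht ↦ intervalIntegrable_bridgeKernelDeriv₂ hδ hs ht

lemma intervalIntegrable_mul_bridgeKernel_right (hδ : 0 < δ) (hs : s ∈ Ioo 0 1)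
    (hψ : Continuous ψ) (h1 : 1 ∉ tsupport ψ) :
    IntervalIntegrable (fun r ↦ ψ r * bridgeKernel δ s r) volume s 1 :=
  intervalIntegrable_mul_of_notMem_tsupport hs.2 hψ h1 fun _ ht ↦
    ((continuousOn_bridgeKernel_right hδ hs).mono fun _ hr ↦
      ⟨hr.1, hr.2.trans_lt ht.2⟩).intervalIntegrable_of_Icc ht.1.le

lemma intervalIntegrable_mul_bridgeKernelDeriv₂ (hδ : 0 < δ) (hs : s ∈ Ioo 0 1)
    (hh : Continuous h) (h1 : 1 ∉ tsupport h) :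
    IntervalIntegrable (fun r ↦ h r * bridgeKernelDeriv₂ δ s r) volume s 1 :=
  intervalIntegrable_mul_of_notMem_tsupport hs.2 hh h1
    fun _ ht ↦ intervalIntegrable_bridgeKernelDeriv₂ hδ hs ht

lemma bridgeKernelDeriv_self_add_one_sub (hδ : 0 < δ) (hs : s ∈ Ioo 0 1) :
    bridgeKernelDeriv δ s s + bridgeKernelDeriv δ (1 - s) (1 - s) = -1 := by
  rw [bridgeKernelDeriv_self hs, bridgeKernelDeriv_self ⟨sub_pos.2 hs.2, sub_lt_self 1 hs.1⟩]
  linear_combination Kcoef_mul_hyp2F1_sub_hyp2F1 hδ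

lemma one_notMem_tsupport_comp_one_sub (h0 : 0 ∉ tsupport f) :
    1 ∉ tsupport fun r ↦ f (1 - r) := fun h1 ↦ by
  have hmem := tsupport_comp_subset_preimage f (f := fun r : ℝ ↦ 1 - r) (by fun_prop) h1
  rw [mem_preimage, sub_self] at hmem
  exact h0 hmem

lemma deriv_deriv_comp_const_sub (f : ℝ → ℝ) (a r : ℝ) :
    deriv (deriv fun r ↦ f (a - r)) r = deriv (deriv f) (a - r) := by
  rw [funext fun x ↦ deriv_comp_const_sub (f := f) a x, deriv.fun_neg,
    deriv_comp_const_sub (f := deriv f), neg_neg]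

theorem add_integral_deriv_deriv_mul_bridgeKernel (hδ : 0 < δ) (hs : s ∈ Ioo 0 1)
    (hh : ContDiff ℝ 2 h) (h0 : 0 ∉ tsupport h) (h1 : 1 ∉ tsupport h) :
    h s + ∫ r in 0..1, deriv (deriv h) r * bridgeKernel δ s r =
      (∫ r in s..1, h r * bridgeKernelDeriv₂ δ s r) +
        ∫ r in (1 - s)..1, h (1 - r) * bridgeKernelDeriv₂ δ (1 - s) r := by
  have hs' : 1 - s ∈ Ioo (0 : ℝ) 1 := ⟨sub_pos.2 hs.2, sub_lt_self 1 hs.1⟩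
  have hreflect : ContDiff ℝ 2 fun r ↦ h (1 - r) := hh.comp (contDiff_const.sub contDiff_id)
  have hreflect1 := one_notMem_tsupport_comp_one_sub h0
  have hcont : Continuous (deriv (deriv h)) := hh.deriv'.continuous_deriv_one
  have hsupp (x : ℝ) (hx : x ∉ tsupport h) : x ∉ tsupport (deriv (deriv h)) := fun hx' ↦
    hx (tsupport_deriv_subset (tsupport_deriv_subset hx'))
  have hkernel (r : ℝ) : bridgeKernel δ s (1 - r) = bridgeKernel δ (1 - s) r := by
    rw [← bridgeKernel_one_sub, sub_sub_cancel]
  have hright := intervalIntegrable_mul_bridgeKernel_right hδ hs hcont (hsupp 1 h1)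
  have hleft : IntervalIntegrable (fun r ↦ deriv (deriv h) (1 - r) * bridgeKernel δ (1 - s) r)
      volume (1 - s) 1 := intervalIntegrable_mul_bridgeKernel_right hδ hs'
    (hcont.comp (continuous_sub_left 1)) (one_notMem_tsupport_comp_one_sub (hsupp 0 h0))
  have right := integral_deriv_deriv_mul_bridgeKernel hδ hs hh h1
  have left := integral_deriv_deriv_mul_bridgeKernel hδ hs' hreflect hreflect1
  simp only [deriv_deriv_comp_const_sub, deriv_comp_const_sub, bridgeKernel_one_sub,
    sub_sub_cancel] at left
  rw [integral_zero_one_eq_add hright (by simpa only [hkernel] using hleft), right]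
  simp only [hkernel]
  rw [left]
  linear_combination h s * bridgeKernelDeriv_self_add_one_sub hδ hs

/-- The `b`-integral of the integration by parts formula. -/
noncomputable def thirdDerivMoment (δ s r : ℝ) : ℝ :=
  ∫ b in Ioi 0, b ^ (δ - 1) * deriv^[3] (SigmaRS δ r s) b

lemma thirdDerivMoment_one_sub (δ : ℝ) (hsr : s ≠ r) :
    thirdDerivMoment δ (1 - s) (1 - r) = thirdDerivMoment δ s r := by
  rw [thirdDerivMoment, thirdDerivMoment, SigmaRS_one_sub δ hsr]

theorem integral_mul_thirdDerivMoment (hδ : 0 < δ) (hs : s ∈ Ioo 0 1) (hh : ContDiff ℝ 2 h)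
    (h0 : 0 ∉ tsupport h) (h1 : 1 ∉ tsupport h) :
    ∫ r in 0..1, h r * thirdDerivMoment δ s r =
      4 * (δ - 2) * (h s + ∫ r in 0..1, deriv (deriv h) r * bridgeKernel δ s r) := by
  have hs' : 1 - s ∈ Ioo (0 : ℝ) 1 := ⟨sub_pos.2 hs.2, sub_lt_self 1 hs.1⟩
  have hmoment {s r : ℝ} (hs : s ∈ Ioo 0 1) (hr : r ∈ Ioo s 1) :
      thirdDerivMoment δ s r = 4 * (δ - 2) * bridgeKernelDeriv₂ δ s r :=
    integral_rpow_mul_iterate_three_deriv_SigmaRS hδ hs ⟨hs.1.trans hr.1, hr.2⟩ hr.1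
  have hright {r : ℝ} (hr : r ∈ Ioo s 1) :
      4 * (δ - 2) * (h r * bridgeKernelDeriv₂ δ s r) = h r * thirdDerivMoment δ s r := by
    rw [hmoment hs hr, mul_left_comm]
  have hleft {r : ℝ} (hr : r ∈ Ioo (1 - s) 1) :
      4 * (δ - 2) * (h (1 - r) * bridgeKernelDeriv₂ δ (1 - s) r) =
        h (1 - r) * thirdDerivMoment δ s (1 - r) := by
    rw [← thirdDerivMoment_one_sub δ (sub_lt_comm.1 hr.1).ne', sub_sub_cancel, hmoment hs' hr,
      mul_left_comm]
  have hright_int := (intervalIntegrable_mul_bridgeKernelDeriv₂ hδ hs hh.continuous h1).const_mul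
    (4 * (δ - 2))
  have hleft_int := (intervalIntegrable_mul_bridgeKernelDeriv₂ hδ hs'
    (hh.continuous.comp (continuous_sub_left 1)) (one_notMem_tsupport_comp_one_sub h0)).const_mul
    (4 * (δ - 2))
  rw [add_integral_deriv_deriv_mul_bridgeKernel hδ hs hh h0 h1, mul_add,
    ← intervalIntegral.integral_const_mul, ← intervalIntegral.integral_const_mul,
    intervalIntegral.integral_congr_Ioo_of_le hs.2.le fun r hr ↦ hright hr,
    intervalIntegral.integral_congr_Ioo_of_le hs'.2.le fun r hr ↦ hleft hr]
  exact integral_zero_one_eq_add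
    (hright_int.congr_uIoo fun r hr ↦ hright (uIoo_of_le hs.2.le ▸ hr))
    (hleft_int.congr_uIoo fun r hr ↦ hleft (uIoo_of_le hs'.2.le ▸ hr))

lemma intervalIntegrable_mul_integral_mul_bridgeKernel (hδ : 0 < δ)
    (hφ : IntervalIntegrable φ volume 0 1) (hψ : IntervalIntegrable ψ volume 0 1) :
    IntervalIntegrable (fun s ↦ φ s * ∫ r in 0..1, ψ r * bridgeKernel δ s r) volume 0 1 := by
  obtain ⟨M, hM⟩ := exists_abs_bridgeKernel_le hδ
  rw [intervalIntegrable_iff_integrableOn_Ioo_of_le zero_le_one] at hφ hψ ⊢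
  have hmeas : AEStronglyMeasurable (fun x : ℝ × ℝ ↦ bridgeKernel δ x.1 x.2)
      ((volume.restrict (Ioo 0 1)).prod (volume.restrict (Ioo 0 1))) := by
    rw [Measure.prod_restrict]
    exact (continuousOn_bridgeKernel hδ).aestronglyMeasurable
      (measurableSet_Ioo.prod measurableSet_Ioo)
  have hbound : ∀ᵐ x ∂(volume.restrict (Ioo 0 1)).prod (volume.restrict (Ioo 0 1)),
      ‖bridgeKernel δ x.1 x.2‖ ≤ M := by
    rw [Measure.prod_restrict]
    filter_upwards [ae_restrict_mem (measurableSet_Ioo.prod measurableSet_Ioo)] with x hx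
    exact hM x.1 hx.1 x.2 hx.2
  refine ((hφ.mul_prod hψ).mul_bdd hmeas hbound).integral_prod_left.congr (ae_of_all _ fun s ↦ ?_)
  simp only [mul_assoc, integral_const_mul, intervalIntegral.integral_of_le zero_le_one,
    integral_Ioc_eq_integral_Ioo]

lemma integral_mul_twoPt (hδ : 0 < δ) (hs : s ∈ Ioo 0 1) (ψ : ℝ → ℝ) :
    ∫ r in 0..1, ψ r * twoPt δ s r = ∫ r in 0..1, ψ r * bridgeKernel δ s r := by
  rw [intervalIntegral.integral_of_le zero_le_one, intervalIntegral.integral_of_le zero_le_one,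
    integral_Ioc_eq_integral_Ioo, integral_Ioc_eq_integral_Ioo]
  refine setIntegral_congr_ae measurableSet_Ioo ?_
  filter_upwards [Measure.ae_ne volume s] with r hne hr
  rw [twoPt_eq_bridgeKernel hδ hs hr hne.symm]

end BridgeIntegrationByParts

theorem bessel_ibpf_linear_general (δ : ℝ) (hδ : 0 < δ) (hδ2 : δ ≠ 2)
    (φ h : ℝ → ℝ) (hφ : IntervalIntegrable φ volume 0 1)
    (hh : ContDiff ℝ 2 h) (hsupp : tsupport h ⊆ Set.Ioo 0 1) :
    ∫ r in (0:ℝ)..1, φ r * h r =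
      -(∫ s in (0:ℝ)..1, ∫ r in (0:ℝ)..1, φ s * deriv (deriv h) r * twoPt δ s r)
      + (1 / (4 * (δ - 2))) *
        ∫ s in (0:ℝ)..1, ∫ r in (0:ℝ)..1, φ s * h r *
          ∫ b in Set.Ioi (0:ℝ), b ^ (δ - 1) * deriv^[3] (SigmaRS δ r s) b := by
  have h0 : 0 ∉ tsupport h := fun hmem ↦ (hsupp hmem).1.false
  have h1 : 1 ∉ tsupport h := fun hmem ↦ (hsupp hmem).2.false
  have hδ2' : 4 * (δ - 2) ≠ 0 := mul_ne_zero four_ne_zero (sub_ne_zero.2 hδ2)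
  have htwoPt : ∫ s in 0..1, ∫ r in 0..1, φ s * deriv (deriv h) r * twoPt δ s r =
      ∫ s in 0..1, φ s * ∫ r in 0..1, deriv (deriv h) r * bridgeKernel δ s r :=
    intervalIntegral.integral_congr_Ioo_of_le zero_le_one fun s hs ↦ by
      simp only [mul_assoc, intervalIntegral.integral_const_mul, integral_mul_twoPt hδ hs]
  have hmoment : ∫ s in 0..1, ∫ r in 0..1, φ s * h r * thirdDerivMoment δ s r =
      4 * (δ - 2) * ∫ s in 0..1, (φ s * h s +
        φ s * ∫ r in 0..1, deriv (deriv h) r * bridgeKernel δ s r) := by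
    rw [← intervalIntegral.integral_const_mul]
    refine intervalIntegral.integral_congr_Ioo_of_le zero_le_one fun s hs ↦ ?_
    simp only [mul_assoc (φ s), intervalIntegral.integral_const_mul,
      integral_mul_thirdDerivMoment hδ hs hh h0 h1]
    ring
  unfold thirdDerivMoment at hmoment
  rw [htwoPt, hmoment, one_div, inv_mul_cancel_left₀ hδ2', intervalIntegral.integral_add
    (hφ.mul_continuousOn hh.continuous.continuousOn)
    (intervalIntegrable_mul_integral_mul_bridgeKernel hδ hφ
      (hh.deriv'.continuous_deriv_one.intervalIntegrable 0 1)), neg_add_cancel_comm_assoc]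

theorem bessel_ibpf_linear (δ : ℝ) (hδ : 0 < δ) (hδ2 : δ ≠ 2)
    (φ h : ℝ → ℝ) (hφ : ContinuousOn φ (Set.Icc 0 1))
    (hh : ContDiff ℝ 2 h) (hsupp : tsupport h ⊆ Set.Ioo 0 1) :
    ∫ r in (0:ℝ)..1, φ r * h r =
      -(∫ s in (0:ℝ)..1, ∫ r in (0:ℝ)..1, φ s * deriv (deriv h) r * twoPt δ s r)
      + (1 / (4 * (δ - 2))) *
        ∫ s in (0:ℝ)..1, ∫ r in (0:ℝ)..1, φ s * h r *
          ∫ b in Set.Ioi (0:ℝ), b ^ (δ - 1) * deriv^[3] (SigmaRS δ r s) b :=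
  bessel_ibpf_linear_general δ hδ hδ2 φ h (hφ.intervalIntegrable_of_Icc zero_le_one) hh hsupp
end

section
/- Let α, β, γ be complex numbers such that γ is not a nonpositive integer and γ−α−β is a negative real number that is not an integer. Then, as z→1 with z ∈ (0,1), one has ₂F₁(α,β,γ,z) ∼ (Γ(γ)Γ(α+β−γ))/(Γ(α)Γ(β)) · (1−z)^{γ−α−β}; equivalently, lim_{z→1⁻} (1−z)^{α+β−γ} ₂F₁(α,β,γ,z) = Γ(γ)Γ(α+β−γ)/(Γ(α)Γ(β)). -/
open Filter

/-- Ascending Pochhammer symbol `(a)_k = a(a+1)⋯(a+k-1)` for a complex number `a`. -/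
noncomputable def cpoch (a : ℂ) (k : ℕ) : ℂ := ∏ i ∈ Finset.range k, (a + i)

/-- Gauss hypergeometric function `₂F₁(a,b,c,z) = ∑ (a)_k (b)_k / (k! (c)_k) z^k`
with complex parameters. -/
noncomputable def chyp2F1 (a b c z : ℂ) : ℂ :=
  ∑' k : ℕ, (cpoch a k * cpoch b k) / ((Nat.factorial k : ℂ) * cpoch c k) * z ^ k

open Complex Topology

/-!
Put `s = α + β - γ`. The coefficients of `₂F₁(α, β, γ, z)` are the coefficients `(s)_k / k!` of the
binomial series of `(1 - z)^(-s)`, multiplied by the ratios `(α)_k (β)_k / ((γ)_k (s)_k)`; by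
Euler's limit formula for `Γ` these ratios converge to `Γ(γ) Γ(s) / (Γ(α) Γ(β))`. Hence
`(1 - z)^s ₂F₁(α, β, γ, z)` is an average of the ratios with the weights
`(1 - z)^s (s)_k / k! z^k`. For `Re s > 0` these weights have sum `1`, each of them vanishes as
`z → 1`, and their absolute values have a bounded sum in any Stolz angle: there `(s)_k` may be
compared with `(Re s)_k`, whose binomial series at `|z|` is `(1 - |z|)^(-Re s)`. By Toeplitz's
theorem the averages have the same limit as the ratios.
-/

section Toeplitz

variable {ι κ 𝕜 E : Type*} [NormedField 𝕜] [NormedAddCommGroup E] [NormedSpace 𝕜 E]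
  {l : Filter ι} {w : ι → κ → 𝕜} {r : κ → E} {L : E} {C : ℝ}

lemma summable_norm_smul_of_tendsto_cofinite {v : κ → 𝕜} (hv : Summable fun k ↦ ‖v k‖)
    (hr : Tendsto r cofinite (𝓝 L)) : Summable fun k ↦ ‖v k • r k‖ := by
  obtain ⟨B, hB⟩ := hr.norm.bddAbove_range_of_cofinite
  refine (hv.mul_right B).of_nonneg_of_le (fun k ↦ norm_nonneg _) fun k ↦ ?_
  rw [norm_smul]
  gcongr
  exact hB ⟨k, rfl⟩

lemma tendsto_tsum_smul_zero_of_tendsto_cofinite (hr : Tendsto r cofinite (𝓝 0))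
    (hw₀ : ∀ k, Tendsto (fun i ↦ w i k) l (𝓝 0))
    (hwC : ∀ᶠ i in l, Summable (fun k ↦ ‖w i k‖) ∧ ∑' k, ‖w i k‖ ≤ C) :
    Tendsto (fun i ↦ ∑' k, w i k • r k) l (𝓝 0) := by
  refine NormedAddGroup.tendsto_nhds_zero.2 fun ε hε ↦ ?_
  obtain ⟨δ, hδ, hCδ⟩ := exists_pos_mul_lt hε C
  have hfin : {k | ¬ ‖r k‖ < δ}.Finite :=
    NormedAddGroup.tendsto_nhds_zero.1 hr δ hδ
  set S := hfin.toFinset with hS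
  have hhead : Tendsto (fun i ↦ ∑ k ∈ S, ‖w i k • r k‖) l (𝓝 0) := by
    simpa using tendsto_finsetSum S fun k _ ↦ ((hw₀ k).smul_const (r k)).norm
  filter_upwards [hwC, hhead.eventually_lt_const (sub_pos.2 hCδ)] with i ⟨hsum, hle⟩ hi
  have hwr := summable_norm_smul_of_tendsto_cofinite hsum hr
  have htail (k : {k // k ∉ S}) : ‖w i k • r k‖ ≤ ‖w i k‖ * δ := by
    have : ‖r k‖ < δ := by simpa [hS] using k.2
    rw [norm_smul]
    gcongr
  calc ‖∑' k, w i k • r k‖ ≤ ∑' k, ‖w i k • r k‖ := norm_tsum_le_tsum_norm hwr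
    _ = ∑ k ∈ S, ‖w i k • r k‖ + ∑' k : {k // k ∉ S}, ‖w i k • r k‖ :=
      (hwr.sum_add_tsum_subtype_compl S).symm
    _ ≤ ∑ k ∈ S, ‖w i k • r k‖ + ∑' k : {k // k ∉ S}, ‖w i k‖ * δ := by
      exact add_le_add_right
        ((hwr.subtype _).tsum_le_tsum htail ((hsum.mul_right δ).subtype _)) _
    _ ≤ ∑ k ∈ S, ‖w i k • r k‖ + (∑' k, ‖w i k‖) * δ := by
      rw [← tsum_mul_right]
      gcongr
      exact (hsum.mul_right δ).tsum_subtype_le _ {k | k ∉ S} fun k ↦ by positivity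
    _ ≤ ∑ k ∈ S, ‖w i k • r k‖ + C * δ := by gcongr
    _ < ε := by linarith

theorem tendsto_tsum_smul_of_tendsto_cofinite [CompleteSpace 𝕜] [CompleteSpace E]
    (hr : Tendsto r cofinite (𝓝 L)) (hw₀ : ∀ k, Tendsto (fun i ↦ w i k) l (𝓝 0))
    (hw₁ : Tendsto (fun i ↦ ∑' k, w i k) l (𝓝 1))
    (hwC : ∀ᶠ i in l, Summable (fun k ↦ ‖w i k‖) ∧ ∑' k, ‖w i k‖ ≤ C) :
    Tendsto (fun i ↦ ∑' k, w i k • r k) l (𝓝 L) := by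
  have hr' : Tendsto (fun k ↦ r k - L) cofinite (𝓝 0) := tendsto_sub_nhds_zero_iff.2 hr
  have hlim := (tendsto_tsum_smul_zero_of_tendsto_cofinite hr' hw₀ hwC).add (hw₁.smul_const L)
  rw [zero_add, one_smul] at hlim
  refine hlim.congr' ?_
  filter_upwards [hwC] with i ⟨hsum, _⟩
  rw [← hsum.of_norm.tsum_smul_const, ←
    (summable_norm_smul_of_tendsto_cofinite hsum hr').of_norm.tsum_add
      (hsum.of_norm.smul_const L)]
  simp only [smul_sub, sub_add_cancel]

end Toeplitz

section Pochhammer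

lemma ne_neg_natCast_of_re_pos {s : ℂ} (hs : 0 < s.re) (n : ℕ) : s ≠ -n := by
  rintro rfl
  simp only [neg_re, natCast_re, Left.neg_pos_iff] at hs
  exact hs.not_ge n.cast_nonneg

lemma cpoch_ne_zero {s : ℂ} (hs : ∀ n : ℕ, s ≠ -n) (k : ℕ) : cpoch s k ≠ 0 :=
  Finset.prod_ne_zero_iff.2 fun i _ h ↦ hs i (eq_neg_of_add_eq_zero_left h)

lemma cpoch_eq_ascPochhammer_eval (s : ℂ) (k : ℕ) : cpoch s k = (ascPochhammer ℂ k).eval s := by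
  induction k with
  | zero => simp [cpoch]
  | succ k ih => rw [ascPochhammer_succ_eval, ← ih, cpoch, cpoch, Finset.prod_range_succ]

lemma cpoch_div_factorial_eq_multichoose (s : ℂ) (k : ℕ) :
    cpoch s k / k.factorial = Ring.multichoose s k := by
  rw [div_eq_iff (Nat.cast_ne_zero.2 k.factorial_ne_zero), mul_comm, ← nsmul_eq_mul,
    Ring.factorial_nsmul_multichoose_eq_ascPochhammer, Polynomial.ascPochhammer_smeval_eq_eval,
    cpoch_eq_ascPochhammer_eval]

lemma ofReal_norm_cpoch_ofReal {σ : ℝ} (hσ : 0 ≤ σ) (k : ℕ) :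
    (‖cpoch σ k‖ : ℂ) = cpoch σ k := by
  have hcast : cpoch σ k = ((∏ i ∈ Finset.range k, (σ + i) : ℝ) : ℂ) := by simp [cpoch]
  rw [hcast, Complex.norm_of_nonneg (Finset.prod_nonneg fun i _ ↦ by positivity)]

theorem tendsto_cpoch_succ_div_cpow_mul_factorial (s : ℂ) :
    Tendsto (fun n : ℕ ↦ cpoch s (n + 1) / ((n : ℂ) ^ s * n.factorial)) atTop
      (𝓝 (Gamma s)⁻¹) := by
  by_cases hs : ∀ m : ℕ, s ≠ -m
  · simpa only [GammaSeq, inv_div, cpoch] using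
      (GammaSeq_tendsto_Gamma s).inv₀ (Gamma_ne_zero hs)
  · push Not at hs
    obtain ⟨m, rfl⟩ := hs
    rw [Gamma_neg_nat_eq_zero, inv_zero]
    refine tendsto_const_nhds.congr' ?_
    filter_upwards [eventually_ge_atTop m] with n hn
    have hzero : cpoch (-m) (n + 1) = 0 :=
      Finset.prod_eq_zero (Finset.mem_range_succ_iff.2 hn) (neg_add_cancel _)
    rw [hzero, zero_div]

theorem tendsto_cpoch_mul_cpoch_div {α β γ s : ℂ} (h : α + β = γ + s)
    (hγ : ∀ n : ℕ, γ ≠ -n) (hs : ∀ n : ℕ, s ≠ -n) :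
    Tendsto (fun k ↦ cpoch α k * cpoch β k / (cpoch γ k * cpoch s k)) atTop
      (𝓝 (Gamma γ * Gamma s / (Gamma α * Gamma β))) := by
  rw [← tendsto_add_atTop_iff_nat 1]
  have hlim := ((tendsto_cpoch_succ_div_cpow_mul_factorial α).mul
    (tendsto_cpoch_succ_div_cpow_mul_factorial β)).div
    ((tendsto_cpoch_succ_div_cpow_mul_factorial γ).mul
      (tendsto_cpoch_succ_div_cpow_mul_factorial s))
    (mul_ne_zero (inv_ne_zero (Gamma_ne_zero hγ)) (inv_ne_zero (Gamma_ne_zero hs)))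
  rw [← mul_inv, ← mul_inv, inv_div_inv] at hlim
  refine hlim.congr' ?_
  filter_upwards [eventually_ne_atTop 0] with n hn
  have hn' : (n : ℂ) ≠ 0 := Nat.cast_ne_zero.2 hn
  have hpow : (n : ℂ) ^ α * (n : ℂ) ^ β = (n : ℂ) ^ γ * (n : ℂ) ^ s := by
    rw [← cpow_add _ _ hn', ← cpow_add _ _ hn', h]
  have hfac : (n.factorial : ℂ) ≠ 0 := Nat.cast_ne_zero.2 n.factorial_ne_zero
  have hscale : (n : ℂ) ^ γ * (n : ℂ) ^ s * (n.factorial * n.factorial) ≠ 0 := by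
    simp [cpow_eq_zero_iff, hn', hfac]
  simp only [Pi.div_apply, div_mul_div_comm, mul_mul_mul_comm _ (n.factorial : ℂ), hpow]
  exact div_div_div_cancel_right₀ hscale _ _

theorem exists_norm_cpoch_le_mul_norm_cpoch {s t : ℂ} (h : s.re = t.re)
    (ht : ∀ n : ℕ, t ≠ -n) : ∃ C, ∀ k, ‖cpoch s k‖ ≤ C * ‖cpoch t k‖ := by
  suffices hlim : Tendsto (fun k ↦ ‖cpoch s k‖ / ‖cpoch t k‖) atTop
      (𝓝 (‖(Gamma s)⁻¹‖ / ‖(Gamma t)⁻¹‖)) by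
    obtain ⟨C, hC⟩ := hlim.bddAbove_range
    exact ⟨C, fun k ↦ (div_le_iff₀ (norm_pos_iff.2 (cpoch_ne_zero ht k))).1 (hC ⟨k, rfl⟩)⟩
  rw [← tendsto_add_atTop_iff_nat 1]
  refine ((tendsto_cpoch_succ_div_cpow_mul_factorial s).norm.div
    (tendsto_cpoch_succ_div_cpow_mul_factorial t).norm
    (norm_ne_zero_iff.2 (inv_ne_zero (Gamma_ne_zero ht)))).congr' ?_
  filter_upwards [eventually_gt_atTop 0] with n hn
  have hscale : (n : ℝ) ^ t.re * ‖(n.factorial : ℂ)‖ ≠ 0 := by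
    rw [norm_natCast]
    positivity
  simp only [Pi.div_apply, norm_div, norm_mul, norm_natCast_cpow_of_pos hn, h]
  exact div_div_div_cancel_right₀ hscale _ _

end Pochhammer

section BinomialSeries

theorem hasSum_cpoch_div_factorial_mul_pow (s : ℂ) {z : ℂ} (hz : ‖z‖ < 1) :
    HasSum (fun k : ℕ ↦ cpoch s k / k.factorial * z ^ k) ((1 - z) ^ (-s)) := by
  have hsum := (one_div_one_sub_cpow_hasFPowerSeriesOnBall_zero s).hasSum (y := z)
    (by simpa [← ofReal_norm] using hz)
  rw [zero_add, one_div, ← cpow_neg] at hsum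
  simpa only [FormalMultilinearSeries.ofScalars_apply_eq, ← Ring.multichoose_eq, smul_eq_mul,
    cpoch_div_factorial_eq_multichoose] using hsum

lemma hasSum_norm_cpoch_div_factorial_mul_pow {σ ρ : ℝ} (hσ : 0 ≤ σ) (hρ : |ρ| < 1) :
    HasSum (fun k : ℕ ↦ ‖cpoch σ k‖ / k.factorial * ρ ^ k) ((1 - ρ) ^ (-σ)) := by
  have hsum := hasSum_cpoch_div_factorial_mul_pow σ (z := ρ) (by rwa [norm_real])
  rw [← hasSum_ofReal]
  convert hsum using 1
  · ext k
    push_cast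
    rw [ofReal_norm_cpoch_ofReal hσ]
  · rw [ofReal_cpow (sub_nonneg.2 (le_of_abs_le hρ.le)), ofReal_sub, ofReal_one, ofReal_neg]

end BinomialSeries

section StolzAngle

lemma norm_cpow_le_exp_mul_rpow (z s : ℂ) :
    ‖z ^ s‖ ≤ Real.exp (Real.pi * |s.im|) * ‖z‖ ^ s.re := by
  have harg : -(arg z * s.im) ≤ Real.pi * |s.im| :=
    calc -(arg z * s.im) ≤ |arg z| * |s.im| := by rw [← abs_mul]; exact neg_le_abs _
      _ ≤ Real.pi * |s.im| := by gcongr; exact abs_arg_le_pi z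
  calc ‖z ^ s‖ ≤ ‖z‖ ^ s.re / Real.exp (arg z * s.im) := norm_cpow_le z s
    _ = Real.exp (-(arg z * s.im)) * ‖z‖ ^ s.re := by rw [Real.exp_neg, div_eq_inv_mul]
    _ ≤ Real.exp (Real.pi * |s.im|) * ‖z‖ ^ s.re := by gcongr

lemma norm_one_sub_cpow_mul_rpow_le {s z : ℂ} {M : ℝ} (hs : 0 ≤ s.re) (hz : z ∈ stolzSet M) :
    ‖(1 - z) ^ s‖ * (1 - ‖z‖) ^ (-s.re) ≤ Real.exp (Real.pi * |s.im|) * M ^ s.re := by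
  have hz₁ : 0 < 1 - ‖z‖ := sub_pos.2 hz.1
  have hM : 0 ≤ M := nonneg_of_mul_nonneg_left ((norm_nonneg _).trans hz.2.le) hz₁
  calc ‖(1 - z) ^ s‖ * (1 - ‖z‖) ^ (-s.re)
      ≤ Real.exp (Real.pi * |s.im|) * ‖1 - z‖ ^ s.re * (1 - ‖z‖) ^ (-s.re) := by
        gcongr
        exact norm_cpow_le_exp_mul_rpow (1 - z) s
    _ ≤ Real.exp (Real.pi * |s.im|) * (M * (1 - ‖z‖)) ^ s.re * (1 - ‖z‖) ^ (-s.re) := by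
        gcongr
        exact hz.2.le
    _ = Real.exp (Real.pi * |s.im|) * M ^ s.re := by
        rw [Real.mul_rpow hM hz₁.le, mul_assoc, mul_assoc, ← Real.rpow_add hz₁,
          add_neg_cancel, Real.rpow_zero, mul_one]

end StolzAngle

section BinomialWeight

/-- The `k`-th term of the binomial series of `(1 - z)^(-s)`, divided by the value of its sum. For
`s > 0` and `0 < z < 1` these are the probabilities of the negative binomial distribution. -/
noncomputable def binomialWeight (s z : ℂ) (k : ℕ) : ℂ :=
  (1 - z) ^ s * (cpoch s k / k.factorial * z ^ k)

variable {s : ℂ}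

lemma hasSum_binomialWeight (s : ℂ) {z : ℂ} (hz : ‖z‖ < 1) : HasSum (binomialWeight s z) 1 := by
  have hz₁ : 1 - z ≠ 0 := sub_ne_zero.2 fun h ↦ by simp [← h] at hz
  have hsum := (hasSum_cpoch_div_factorial_mul_pow s hz).mul_left ((1 - z) ^ s)
  rwa [← cpow_add _ _ hz₁, add_neg_cancel, cpow_zero] at hsum

lemma tendsto_binomialWeight_nhds_one (hs : 0 < s.re) (k : ℕ) :
    Tendsto (fun z ↦ binomialWeight s z k) (𝓝 1) (𝓝 0) := by
  have hpow : ContinuousAt (fun z : ℂ ↦ (1 - z) ^ s) 1 :=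
    ContinuousAt.comp (f := fun z : ℂ ↦ 1 - z) (g := (· ^ s))
      (continuousAt_cpow_const_of_re_pos (by simp) hs) (by fun_prop)
  have hzero : binomialWeight s 1 k = 0 := by
    rw [binomialWeight, sub_self, zero_cpow (ne_zero_of_re_pos hs), zero_mul]
  have hcont : ContinuousAt (fun z ↦ binomialWeight s z k) 1 := hpow.mul (by fun_prop)
  simpa only [hzero] using hcont.tendsto

theorem exists_tsum_norm_binomialWeight_le (hs : 0 < s.re) (M : ℝ) :
    ∃ C, ∀ z ∈ stolzSet M,
      Summable (fun k ↦ ‖binomialWeight s z k‖) ∧ ∑' k, ‖binomialWeight s z k‖ ≤ C := by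
  obtain ⟨B, hB⟩ := exists_norm_cpoch_le_mul_norm_cpoch (ofReal_re s.re).symm
    (ne_neg_natCast_of_re_pos (s := s.re) hs)
  have hB₀ : 0 ≤ B := zero_le_one.trans (by simpa [cpoch] using hB 0)
  refine ⟨B * (Real.exp (Real.pi * |s.im|) * M ^ s.re), fun z hz ↦ ?_⟩
  have hmajor := (hasSum_norm_cpoch_div_factorial_mul_pow hs.le (ρ := ‖z‖)
    (by simpa only [abs_norm] using hz.1)).mul_left (B * ‖(1 - z) ^ s‖)
  have hle (k : ℕ) : ‖binomialWeight s z k‖ ≤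
      B * ‖(1 - z) ^ s‖ * (‖cpoch s.re k‖ / k.factorial * ‖z‖ ^ k) :=
    calc ‖binomialWeight s z k‖ = ‖(1 - z) ^ s‖ * (‖cpoch s k‖ / k.factorial * ‖z‖ ^ k) := by
          simp only [binomialWeight, norm_mul, norm_div, norm_pow, norm_natCast]
      _ ≤ ‖(1 - z) ^ s‖ * (B * ‖cpoch s.re k‖ / k.factorial * ‖z‖ ^ k) := by
          gcongr
          exact hB k
      _ = B * ‖(1 - z) ^ s‖ * (‖cpoch s.re k‖ / k.factorial * ‖z‖ ^ k) := by ring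
  have hsum : Summable fun k ↦ ‖binomialWeight s z k‖ :=
    hmajor.summable.of_nonneg_of_le (fun k ↦ norm_nonneg _) hle
  refine ⟨hsum, (hsum.tsum_le_tsum hle hmajor.summable).trans ?_⟩
  rw [hmajor.tsum_eq, mul_assoc]
  exact mul_le_mul_of_nonneg_left (norm_one_sub_cpow_mul_rpow_le hs.le hz) hB₀

theorem tendsto_tsum_binomialWeight_smul {E : Type*} [NormedAddCommGroup E] [NormedSpace ℂ E]
    [CompleteSpace E] {r : ℕ → E} {L : E} (hs : 0 < s.re) (M : ℝ)
    (hr : Tendsto r atTop (𝓝 L)) :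
    Tendsto (fun z ↦ ∑' k, binomialWeight s z k • r k) (𝓝[stolzSet M] 1) (𝓝 L) := by
  obtain ⟨C, hC⟩ := exists_tsum_norm_binomialWeight_le hs M
  refine tendsto_tsum_smul_of_tendsto_cofinite (Nat.cofinite_eq_atTop ▸ hr)
    (fun k ↦ (tendsto_binomialWeight_nhds_one hs k).mono_left nhdsWithin_le_nhds)
    (tendsto_const_nhds.congr' ?_) (eventually_mem_nhdsWithin.mono hC)
  filter_upwards [self_mem_nhdsWithin] with z hz
  exact (hasSum_binomialWeight s hz.1).tsum_eq.symm

end BinomialWeight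

section Hypergeometric

lemma cpow_mul_chyp2F1_eq_tsum_binomialWeight_smul (α β γ : ℂ) {s : ℂ} (hs : ∀ n : ℕ, s ≠ -n)
    (z : ℂ) :
    (1 - z) ^ s * chyp2F1 α β γ z =
      ∑' k, binomialWeight s z k • (cpoch α k * cpoch β k / (cpoch γ k * cpoch s k)) := by
  rw [chyp2F1, ← tsum_mul_left]
  refine tsum_congr fun k ↦ ?_
  have hpoch := cpoch_ne_zero hs k
  rw [binomialWeight, smul_eq_mul]
  field_simp

theorem hyp2F1_asymptotics_at_one_general (α β γ : ℂ) (hγ : ∀ n : ℕ, γ ≠ -(n : ℂ))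
    (hre : (γ - α - β).re < 0) (M : ℝ) :
    Tendsto (fun z : ℂ ↦ (1 - z) ^ (α + β - γ) * chyp2F1 α β γ z) (𝓝[stolzSet M] 1)
      (𝓝 (Gamma γ * Gamma (α + β - γ) / (Gamma α * Gamma β))) := by
  have hpos : 0 < (α + β - γ).re := by
    simp only [sub_re, add_re] at hre ⊢
    linarith
  have hs := ne_neg_natCast_of_re_pos hpos
  simp only [cpow_mul_chyp2F1_eq_tsum_binomialWeight_smul α β γ hs]
  exact tendsto_tsum_binomialWeight_smul hpos M
    (tendsto_cpoch_mul_cpoch_div (add_sub_cancel γ (α + β)).symm hγ hs)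

end Hypergeometric

theorem hyp2F1_asymptotics_at_one (α β γ : ℂ) (hγ : ∀ n : ℕ, γ ≠ -(n : ℂ))
    (him : (γ - α - β).im = 0) (hneg : (γ - α - β).re < 0)
    (hnint : ∀ n : ℤ, γ - α - β ≠ (n : ℂ)) :
    Tendsto (fun z : ℝ => (1 - (z : ℂ)) ^ (α + β - γ) * chyp2F1 α β γ z)
      (nhdsWithin 1 (Set.Ioo (0 : ℝ) 1))
      (nhds (Complex.Gamma γ * Complex.Gamma (α + β - γ) /
        (Complex.Gamma α * Complex.Gamma β))) :=
  ((hyp2F1_asymptotics_at_one_general α β γ hγ hneg 2).mono_left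
    (nhdsWithin_lt_le_nhdsWithin_stolzSet one_lt_two)).comp
    (tendsto_map.mono_left (nhdsWithin_mono 1 Set.Ioo_subset_Iio_self))
end
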